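/- Let h ⊆ L be a finite-dimensional Lie subalgebra (for the Lagrange bracket) that is graded, i.e. h = ⊕_p (h ∩ L_p), with h ∩ L_{−2} = ℝ·1, h ∩ L_{−1} = span{x, z}, and such that the representation of h₀ := h ∩ L₀ on span{x, z} given by w ↦ {u, w} is irreducible. Then h is isomorphic, by a Lie algebra isomorphism carrying h ∩ L_p onto the degree-p component for every p, to exactly one of the following graded subalgebras of L: (1°) span{1, x, y, z, x², xz, z², x(2y−xz), z(2y−xz), (2y−xz)²}; (2°) span{1, x, y, z, x², xz, z²}; (3°) span{1, x, z, x², xz, z²}; (4°) span{1, x, z, x²+z², 2y−xz, x(x²+z²)−2z(2y−xz), z(x²+z²)+2x(2y−xz), (x²+z²)²+4(2y−xz)²}; (5°) span{1, x, z, x²+z², 2y−xz}; (6°) span{1, x, z, x²+z²+α(2y−xz)} for a unique α ≥ 0. -/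

import Mathlib

noncomputable section

open MvPolynomial

/-- The polynomial algebra `L = ℝ[x, y, z]`, with `x = X 0`, `y = X 1`, `z = X 2`. -/
abbrev PL : Type := MvPolynomial (Fin 3) ℝ

/-- The Lagrange bracket
`{f,g} = f_x g_z − f_z g_x + z (f_y g_z − f_z g_y) + f g_y − g f_y` on `L`. -/
noncomputable def lagr (f g : PL) : PL :=
  pderiv 0 f * pderiv 2 g - pderiv 2 f * pderiv 0 g
    + X 2 * (pderiv 1 f * pderiv 2 g - pderiv 2 f * pderiv 1 g)
    + f * pderiv 1 g - g * pderiv 1 f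

/-- `L_p`: the span of the monomials of total weight `p + 2`, where the variables
`x, y, z` have weights `1, 2, 1` respectively. -/
def Lgrade (p : ℤ) : Submodule ℝ PL where
  carrier := {f | ∀ m ∈ f.support, (m 0 : ℤ) + 2 * m 1 + m 2 = p + 2}
  add_mem' := fun {f g} hf hg m hm => by
    rcases Finset.mem_union.mp (MvPolynomial.support_add hm) with hh | hh
    · exact hf m hh
    · exact hg m hh
  zero_mem' := by
    intro m hm
    simp [MvPolynomial.support_zero] at hm
  smul_mem' := fun c f hf m hm => hf m (MvPolynomial.support_smul hm)

/-- The six candidate graded contact subalgebras of `L` (cases `1°`–`5°` indexed by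
`Fin 5`, and the family `6°` indexed by the real parameter `α`). -/
noncomputable def Tgt : Fin 5 ⊕ ℝ → Submodule ℝ PL
  | Sum.inl i =>
      ![Submodule.span ℝ
          {1, X 0, X 1, X 2, X 0 ^ 2, X 0 * X 2, X 2 ^ 2,
            X 0 * (2 * X 1 - X 0 * X 2), X 2 * (2 * X 1 - X 0 * X 2),
            (2 * X 1 - X 0 * X 2) ^ 2},
        Submodule.span ℝ {1, X 0, X 1, X 2, X 0 ^ 2, X 0 * X 2, X 2 ^ 2},
        Submodule.span ℝ {1, X 0, X 2, X 0 ^ 2, X 0 * X 2, X 2 ^ 2},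
        Submodule.span ℝ
          {1, X 0, X 2, X 0 ^ 2 + X 2 ^ 2, 2 * X 1 - X 0 * X 2,
            X 0 * (X 0 ^ 2 + X 2 ^ 2) - 2 * X 2 * (2 * X 1 - X 0 * X 2),
            X 2 * (X 0 ^ 2 + X 2 ^ 2) + 2 * X 0 * (2 * X 1 - X 0 * X 2),
            (X 0 ^ 2 + X 2 ^ 2) ^ 2 + 4 * (2 * X 1 - X 0 * X 2) ^ 2},
        Submodule.span ℝ {1, X 0, X 2, X 0 ^ 2 + X 2 ^ 2, 2 * X 1 - X 0 * X 2}] i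
  | Sum.inr α =>
      Submodule.span ℝ
        {1, X 0, X 2, X 0 ^ 2 + X 2 ^ 2 + C α * (2 * X 1 - X 0 * X 2)}

/-! Since `{x, z} = 1`, a homogeneous `f` of degree `p ≠ -2` is determined by `{x, f}` and `{z, f}`,
and Euler's identity writes `(p + 2) f` explicitly in terms of them. Hence `h` can be computed
degree by degree from `h₀`, and once it vanishes in one degree it vanishes in all later ones.

Modulo the grading element `2y - xz`, the component `h₀` is a Lie algebra of binary quadratic forms,
inside `sl₂`; irreducibility says that these forms have no common real zero. A proper subalgebra
with this property is spanned by one definite form, because two non-commuting elements would span a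
Borel subalgebra, whose forms share a double point.

If all quadratic forms occur, `h₁` is an `sl₂`-module. Were its cubic part nonzero, `x²z` would lie
in `h` and its repeated brackets would produce all powers of `x`; so `h₁` is zero or spanned by
`x (2y - xz)` and `z (2y - xz)`, which gives `1°`–`3°`. If only a definite form occurs, a linear
change of `x, z`, extended to an automorphism of `L`, turns it into `x² + z²`, and prolonging gives
`4°`–`6°`.

The cases differ in dimension. In `6°` the generator of `h₀` acts on `L₋₁` with characteristic
polynomial `T² + 2αT + α² + 4`, and a rescaling of the generator that keeps this shape changes `α`
at most by a sign. -/

variable {f g : PL} {p q : ℤ}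

lemma pderiv_pderiv_comm {R σ : Type*} [CommRing R] (i j : σ) (f : MvPolynomial σ R) :
    pderiv i (pderiv j f) = pderiv j (pderiv i f) := by
  classical
  have h : ⁅(pderiv i : Derivation R (MvPolynomial σ R) (MvPolynomial σ R)),
      (pderiv j : Derivation R (MvPolynomial σ R) (MvPolynomial σ R))⁆ = 0 := by
    refine derivation_ext fun k => ?_
    simp only [Derivation.commutator_apply, pderiv_X, Derivation.coe_zero, Pi.zero_apply,
      Pi.single_apply, apply_ite, map_zero, Derivation.map_one_eq_zero, ite_self, sub_self]
  exact sub_eq_zero.mp (DFunLike.congr_fun h f)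

lemma pderiv_ofNat {R σ : Type*} [CommSemiring R] (i : σ) (n : ℕ) [n.AtLeastTwo] :
    pderiv i (ofNat(n) : MvPolynomial σ R) = 0 :=
  (pderiv i).map_natCast n

lemma coeff_X_mul_pderiv {R σ : Type*} [CommSemiring R] (i : σ) (f : MvPolynomial σ R)
    (m : σ →₀ ℕ) : coeff m (X i * pderiv i f) = m i * coeff m f := by
  classical
  induction f using MvPolynomial.induction_on' with
  | monomial n r =>
    rw [X_mul_pderiv_monomial, coeff_smul, nsmul_eq_mul, coeff_monomial]
    split_ifs with h <;> simp [h]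
  | add f g hf hg => rw [map_add, mul_add, coeff_add, coeff_add, hf, hg, mul_add]

lemma pderiv_algHom {R σ τ : Type*} [CommSemiring R] [Fintype σ]
    (φ : MvPolynomial σ R →ₐ[R] MvPolynomial τ R) (i : τ) (f : MvPolynomial σ R) :
    pderiv i (φ f) = ∑ j, φ (pderiv j f) * pderiv i (φ (X j)) := by
  classical
  induction f using MvPolynomial.induction_on with
  | C a =>
    simp only [← algebraMap_eq, AlgHom.commutes, Derivation.map_algebraMap, map_zero, zero_mul,
      Finset.sum_const_zero]
  | add f g hf hg => simp only [map_add, add_mul, Finset.sum_add_distrib, hf, hg]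
  | mul_X f k hf =>
    simp only [map_mul, pderiv_mul, hf, map_add, add_mul, Finset.sum_add_distrib,
      Finset.sum_mul, pderiv_X, Pi.single_apply, apply_ite φ, map_zero, mul_ite,
      mul_one, mul_zero, ite_mul, zero_mul, Finset.sum_ite_eq, Finset.mem_univ, if_true]
    simp only [mul_right_comm]

lemma not_finiteDimensional_of_X_pow_mem {σ K : Type*} [Field K]
    {h : Submodule K (MvPolynomial σ K)} {k : ℕ} (i : σ) (hpow : ∀ n ≥ k, X i ^ n ∈ h) :
    ¬FiniteDimensional K h := by
  intro hfd
  have hinj : Function.Injective fun n : ℕ => Finsupp.single i (n + k) := fun m n hmn =>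
    Nat.add_right_cancel (Finsupp.single_injective i hmn)
  have hmon := (basisMonomials σ K).linearIndependent.comp _ hinj
  have hv : LinearIndependent K fun n : ℕ =>
      (⟨X i ^ (n + k), hpow _ (Nat.le_add_left k n)⟩ : h) := by
    refine LinearIndependent.of_comp h.subtype ?_
    simpa only [Function.comp_def, Submodule.subtype_apply, coe_basisMonomials,
      X_pow_eq_monomial] using hmon
  exact not_finite_iff_infinite.mpr inferInstance hv.finite

lemma finrank_eq_of_forall_eval {K σ : Type*} [Field K] {n : ℕ}
    {S : Submodule K (MvPolynomial σ K)} {v : Fin n → MvPolynomial σ K}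
    (hS : S = Submodule.span K (Set.range v))
    (hv : ∀ a : Fin n → K, (∀ x, ∑ i, a i * eval x (v i) = 0) → ∀ i, a i = 0) :
    Module.finrank K S = n := by
  rw [hS, finrank_span_eq_card (Fintype.linearIndependent_iff.mpr fun a ha =>
    hv a fun x => ?_), Fintype.card_fin]
  have := congrArg (eval x) ha
  simpa only [map_sum, smul_eval, map_zero] using this

lemma det_eq_zero_of_row_mem {K ι : Type*} [Field K] [Fintype ι] [DecidableEq ι]
    {S : Submodule K (ι → K)} (hS : S ≠ ⊤) {A : Matrix ι ι K} (hA : ∀ i, A i ∈ S) :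
    A.det = 0 := by
  by_contra hdet
  have hli : LinearIndependent K A := Matrix.linearIndependent_rows_of_det_ne_zero hdet
  refine hS (top_le_iff.mp ?_)
  rw [← hli.span_eq_top_of_card_eq_finrank' (Module.finrank_fintype_fun_eq_card K).symm,
    Submodule.span_le]
  exact Set.range_subset_iff.mpr hA

/-! ### The Lagrange bracket -/

lemma lagr_add_left (f₁ f₂ g : PL) : lagr (f₁ + f₂) g = lagr f₁ g + lagr f₂ g := by
  simp only [lagr, map_add]; ring

lemma lagr_add_right (f g₁ g₂ : PL) : lagr f (g₁ + g₂) = lagr f g₁ + lagr f g₂ := by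
  simp only [lagr, map_add]; ring

lemma lagr_smul_left (a : ℝ) (f g : PL) : lagr (a • f) g = a • lagr f g := by
  simp only [lagr, smul_eq_C_mul, pderiv_C_mul]; ring

lemma lagr_smul_right (a : ℝ) (f g : PL) : lagr f (a • g) = a • lagr f g := by
  simp only [lagr, smul_eq_C_mul, pderiv_C_mul]; ring

lemma lagr_zero_left (g : PL) : lagr 0 g = 0 := by
  simp only [lagr, map_zero]; ring

lemma lagr_zero_right (f : PL) : lagr f 0 = 0 := by
  simp only [lagr, map_zero]; ring

lemma lagr_self (f : PL) : lagr f f = 0 := by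
  simp only [lagr]; ring

lemma lagr_skew (f g : PL) : lagr f g = -lagr g f := by
  simp only [lagr]; ring

lemma lagr_mul (f g k : PL) :
    lagr f (g * k) = lagr f g * k + g * lagr f k + g * k * pderiv 1 f := by
  simp only [lagr, pderiv_mul]; ring

lemma lagr_leibniz (f g k : PL) :
    lagr f (lagr g k) = lagr (lagr f g) k + lagr g (lagr f k) := by
  simp only [lagr, map_add, map_sub, pderiv_mul, pderiv_X_self, pderiv_X_of_ne, ne_eq,
    Fin.isValue, Fin.reduceEq, not_false_eq_true, pderiv_pderiv_comm (1 : Fin 3) 0,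
    pderiv_pderiv_comm (2 : Fin 3) 0, pderiv_pderiv_comm (2 : Fin 3) 1]
  ring

lemma lagr_one (f : PL) : lagr 1 f = pderiv 1 f := by
  simp only [lagr, pderiv_one]; ring

lemma lagr_x (f : PL) : lagr (X 0) f = pderiv 2 f + X 0 * pderiv 1 f := by
  simp only [lagr, pderiv_X_self, pderiv_X_of_ne, ne_eq, Fin.isValue, Fin.reduceEq,
    not_false_eq_true]
  ring

lemma lagr_z (f : PL) : lagr (X 2) f = -pderiv 0 f := by
  simp only [lagr, pderiv_X_self, pderiv_X_of_ne, ne_eq, Fin.isValue, Fin.reduceEq,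
    not_false_eq_true]
  ring

/-- The polynomial `2y - xz ∈ L₀`. It is the grading element: `{2y - xz, f} = p f` for
`f ∈ L_p`. -/
abbrev euler : PL := 2 * X 1 - X 0 * X 2

lemma lagr_euler (f : PL) :
    lagr euler f = X 0 * pderiv 0 f + 2 * (X 1 * pderiv 1 f) + X 2 * pderiv 2 f - 2 * f := by
  simp only [lagr, map_sub, pderiv_mul, pderiv_ofNat, pderiv_X_self, pderiv_X_of_ne, ne_eq,
    Fin.isValue, Fin.reduceEq, not_false_eq_true]
  ring

lemma mem_Lgrade : f ∈ Lgrade p ↔ lagr euler f = (p : ℝ) • f := by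
  have hcoeff (m : Fin 3 →₀ ℕ) :
      coeff m (lagr euler f) - coeff m ((p : ℝ) • f) =
        ((((m 0 : ℤ) + 2 * m 1 + m 2 - (p + 2) : ℤ)) : ℝ) * coeff m f := by
    have h2 (k : PL) : coeff m (2 * k) = 2 * coeff m k := by
      rw [two_mul, coeff_add, two_mul]
    rw [lagr_euler, coeff_sub, coeff_add, coeff_add, h2, h2, coeff_X_mul_pderiv,
      coeff_X_mul_pderiv, coeff_X_mul_pderiv, coeff_smul, smul_eq_mul]
    push_cast
    ring
  rw [MvPolynomial.ext_iff]
  refine forall_congr' fun m => ?_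
  rw [← sub_eq_zero (a := coeff m _), hcoeff, mul_eq_zero, Int.cast_eq_zero, sub_eq_zero,
    mem_support_iff, or_iff_not_imp_right]

lemma lagr_mem_Lgrade (hf : f ∈ Lgrade p) (hg : g ∈ Lgrade q) : lagr f g ∈ Lgrade (p + q) := by
  rw [mem_Lgrade] at *
  rw [lagr_leibniz, hf, hg, lagr_smul_left, lagr_smul_right, ← add_smul, Int.cast_add]

lemma eq_zero_of_mem_Lgrade (hp : p < -2) (hf : f ∈ Lgrade p) : f = 0 := by
  refine support_eq_empty.mp (Finset.eq_empty_of_forall_notMem fun m hm => ?_)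
  have := hf m hm
  omega

lemma one_mem_Lgrade : (1 : PL) ∈ Lgrade (-2) := by
  rw [mem_Lgrade, lagr_euler, pderiv_one, pderiv_one, pderiv_one, smul_eq_C_mul,
    Int.cast_neg, Int.cast_ofNat, map_neg, map_ofNat]
  ring

lemma lagr_x_z : lagr (X 0) (X 2) = 1 := by
  rw [lagr_x, pderiv_X_self, pderiv_X_of_ne (by decide), mul_zero, add_zero]

lemma lagr_x_euler : lagr (X 0) euler = X 0 := by
  simp only [lagr_x, map_sub, pderiv_mul, pderiv_ofNat, pderiv_X_self, pderiv_X_of_ne, ne_eq,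
    Fin.isValue, Fin.reduceEq, not_false_eq_true]
  ring

lemma lagr_z_euler : lagr (X 2) euler = X 2 := by
  simp only [lagr_z, map_sub, pderiv_mul, pderiv_ofNat, pderiv_X_self, pderiv_X_of_ne, ne_eq,
    Fin.isValue, Fin.reduceEq, not_false_eq_true]
  ring

lemma x_mem_Lgrade : (X 0 : PL) ∈ Lgrade (-1) := by
  rw [mem_Lgrade, lagr_skew, lagr_x_euler, Int.cast_neg, Int.cast_one, neg_one_smul]

lemma z_mem_Lgrade : (X 2 : PL) ∈ Lgrade (-1) := by
  rw [mem_Lgrade, lagr_skew, lagr_z_euler, Int.cast_neg, Int.cast_one, neg_one_smul]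

lemma euler_mem_Lgrade : euler ∈ Lgrade 0 := by
  rw [mem_Lgrade, lagr_self, Int.cast_zero, zero_smul]

/-! ### Reconstruction from the brackets with `x` and `z` -/

lemma lagr_one_eq_sub (f : PL) :
    lagr 1 f = lagr (X 0) (lagr (X 2) f) - lagr (X 2) (lagr (X 0) f) := by
  rw [lagr_leibniz (X 0), lagr_x_z, add_sub_cancel_right]

lemma lagr_one_lagr_x (f : PL) : lagr 1 (lagr (X 0) f) = lagr (X 0) (lagr 1 f) := by
  rw [lagr_leibniz, lagr_one (X 0), pderiv_X_of_ne (by decide), lagr_zero_left, zero_add]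

lemma lagr_one_lagr_z (f : PL) : lagr 1 (lagr (X 2) f) = lagr (X 2) (lagr 1 f) := by
  rw [lagr_leibniz, lagr_one (X 2), pderiv_X_of_ne (by decide), lagr_zero_left, zero_add]

lemma lagr_x_mem_Lgrade (hf : f ∈ Lgrade (p + 1)) : lagr (X 0) f ∈ Lgrade p :=
  (by ring : -1 + (p + 1) = p) ▸ lagr_mem_Lgrade x_mem_Lgrade hf

lemma lagr_z_mem_Lgrade (hf : f ∈ Lgrade (p + 1)) : lagr (X 2) f ∈ Lgrade p :=
  (by ring : -1 + (p + 1) = p) ▸ lagr_mem_Lgrade z_mem_Lgrade hf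

lemma lagr_one_mem_Lgrade (hf : f ∈ Lgrade (p + 2)) : lagr 1 f ∈ Lgrade p :=
  (by ring : -2 + (p + 2) = p) ▸ lagr_mem_Lgrade one_mem_Lgrade hf

lemma smul_eq_of_mem_Lgrade (hf : f ∈ Lgrade p) :
    ((p : ℝ) + 2) • f = euler * lagr 1 f + X 2 * lagr (X 0) f - X 0 * lagr (X 2) f := by
  rw [mem_Lgrade, lagr_euler] at hf
  rw [lagr_one, lagr_x, lagr_z]
  linear_combination (norm := algebra) -hf

lemma eq_zero_of_lagr_x_of_lagr_z (hp : p ≠ -2) (hf : f ∈ Lgrade p) (hx : lagr (X 0) f = 0)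
    (hz : lagr (X 2) f = 0) : f = 0 := by
  have h := smul_eq_of_mem_Lgrade hf
  rw [lagr_one_eq_sub, hx, hz, lagr_zero_right, lagr_zero_right, sub_zero, mul_zero, mul_zero,
    mul_zero, add_zero, sub_zero, smul_eq_zero] at h
  refine h.resolve_left fun hp' => hp ?_
  exact_mod_cast (eq_neg_of_add_eq_zero_left hp' : (p : ℝ) = -2)

/-- The linear form `a x + b z ∈ L₋₁`. -/
abbrev linForm (a b : ℝ) : PL := a • X 0 + b • X 2

lemma linForm_mem_Lgrade (a b : ℝ) : linForm a b ∈ Lgrade (-1) :=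
  add_mem (Submodule.smul_mem _ a x_mem_Lgrade) (Submodule.smul_mem _ b z_mem_Lgrade)

/-- The binary quadratic form `q₀ x² + q₁ xz + q₂ z² ∈ L₀`, as a linear function of its
coefficient vector; these forms are a copy of `sl₂` acting on the linear forms. -/
def quadForm : (Fin 3 → ℝ) →ₗ[ℝ] PL :=
  Fintype.linearCombination ℝ ![X 0 ^ 2, X 0 * X 2, X 2 ^ 2]

lemma quadForm_apply (q : Fin 3 → ℝ) :
    quadForm q = q 0 • X 0 ^ 2 + q 1 • (X 0 * X 2) + q 2 • X 2 ^ 2 := by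
  simp only [quadForm, Fintype.linearCombination_apply, Fin.sum_univ_three, Matrix.cons_val]

lemma exists_eq_smul_one (hf : f ∈ Lgrade (-2)) : ∃ a : ℝ, f = a • 1 := by
  refine ⟨coeff 0 f, ?_⟩
  rw [smul_eq_C_mul, mul_one]
  ext m
  rw [coeff_C]
  split_ifs with hm
  · rw [hm]
  · refine notMem_support_iff.mp fun hmf => hm ?_
    have := hf m hmf
    exact Finsupp.ext fun
      | 0 => (by omega : 0 = m 0)
      | 1 => (by omega : 0 = m 1)
      | 2 => (by omega : 0 = m 2)

lemma exists_eq_linForm (hf : f ∈ Lgrade (-1)) : ∃ a b, f = linForm a b := by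
  obtain ⟨b, hb⟩ := exists_eq_smul_one (lagr_x_mem_Lgrade (p := -2) hf)
  obtain ⟨a, ha⟩ := exists_eq_smul_one (lagr_z_mem_Lgrade (p := -2) hf)
  have hrec := smul_eq_of_mem_Lgrade hf
  rw [eq_zero_of_mem_Lgrade (by decide) (lagr_one_mem_Lgrade (p := -3) hf), hb, ha] at hrec
  refine ⟨-a, b, ?_⟩
  push_cast at hrec
  linear_combination (norm := algebra) hrec

lemma exists_eq_quadForm_add (hf : f ∈ Lgrade 0) :
    ∃ (q : Fin 3 → ℝ) (d : ℝ), f = quadForm q + d • euler := by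
  obtain ⟨d, hd⟩ := exists_eq_smul_one (lagr_one_mem_Lgrade (p := -2) hf)
  obtain ⟨a, b, hx⟩ := exists_eq_linForm (lagr_x_mem_Lgrade (p := -1) hf)
  obtain ⟨a', b', hz⟩ := exists_eq_linForm (lagr_z_mem_Lgrade (p := -1) hf)
  have hrec := smul_eq_of_mem_Lgrade hf
  rw [hd, hx, hz] at hrec
  refine ⟨![-a' / 2, (a - b') / 2, b / 2], d / 2, ?_⟩
  simp only [quadForm_apply, Matrix.cons_val]
  push_cast at hrec
  linear_combination (norm := algebra) (1 / 2 : ℝ) • hrec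

/-- The binary cubic form `c₀ x³ + c₁ x²z + c₂ xz² + c₃ z³ ∈ L₁`. -/
abbrev cubicForm (c : Fin 4 → ℝ) : PL :=
  c 0 • X 0 ^ 3 + c 1 • (X 0 ^ 2 * X 2) + c 2 • (X 0 * X 2 ^ 2) + c 3 • X 2 ^ 3

lemma exists_eq_cubicForm_add (hf : f ∈ Lgrade 1) :
    ∃ (c : Fin 4 → ℝ) (a b : ℝ), f = cubicForm c + linForm a b * euler := by
  obtain ⟨a, b, h1⟩ := exists_eq_linForm (lagr_one_mem_Lgrade (p := -1) hf)
  obtain ⟨q, d, hx⟩ := exists_eq_quadForm_add (lagr_x_mem_Lgrade (p := 0) hf)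
  obtain ⟨q', d', hz⟩ := exists_eq_quadForm_add (lagr_z_mem_Lgrade (p := 0) hf)
  have hrec := smul_eq_of_mem_Lgrade hf
  rw [h1, hx, hz, quadForm_apply, quadForm_apply] at hrec
  refine ⟨![-q' 0 / 3, (q 0 - q' 1) / 3, (q 1 - q' 2) / 3, q 2 / 3], (a - d') / 3, (b + d) / 3, ?_⟩
  simp only [cubicForm, Matrix.cons_val]
  push_cast at hrec
  linear_combination (norm := algebra) (1 / 3 : ℝ) • hrec

/-! ### Contact subalgebras -/

/-- A graded Lie subalgebra of `L` containing `x` and `z`, hence all of `L₋₂ ⊕ L₋₁`. -/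
structure IsContact (h : Submodule ℝ PL) : Prop where
  lagr_mem : ∀ f ∈ h, ∀ g ∈ h, lagr f g ∈ h
  graded : h = ⨆ p : ℤ, h ⊓ Lgrade p
  x_mem : X 0 ∈ h
  z_mem : X 2 ∈ h

namespace IsContact

variable {h : Submodule ℝ PL} (hh : IsContact h)

include hh

lemma one_mem : 1 ∈ h :=
  lagr_x_z ▸ hh.lagr_mem _ hh.x_mem _ hh.z_mem

lemma linForm_mem (a b : ℝ) : linForm a b ∈ h :=
  h.add_mem (h.smul_mem a hh.x_mem) (h.smul_mem b hh.z_mem)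

lemma lagr_x_mem (hf : f ∈ h ⊓ Lgrade (p + 1)) : lagr (X 0) f ∈ h ⊓ Lgrade p :=
  ⟨hh.lagr_mem _ hh.x_mem _ hf.1, lagr_x_mem_Lgrade hf.2⟩

lemma lagr_z_mem (hf : f ∈ h ⊓ Lgrade (p + 1)) : lagr (X 2) f ∈ h ⊓ Lgrade p :=
  ⟨hh.lagr_mem _ hh.z_mem _ hf.1, lagr_z_mem_Lgrade hf.2⟩

lemma grade_succ_eq_bot (hp : -2 ≤ p) (hbot : h ⊓ Lgrade p = ⊥) : h ⊓ Lgrade (p + 1) = ⊥ := by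
  refine (Submodule.eq_bot_iff _).mpr fun f hf => ?_
  have hx := hh.lagr_x_mem hf
  have hz := hh.lagr_z_mem hf
  rw [hbot, Submodule.mem_bot] at hx hz
  exact eq_zero_of_lagr_x_of_lagr_z (by omega) hf.2 hx hz

lemma grade_eq_bot_of_le {k : ℤ} (hk : -2 ≤ k) (hbot : h ⊓ Lgrade k = ⊥) (hp : k ≤ p) :
    h ⊓ Lgrade p = ⊥ :=
  Int.leInduction hbot (fun _ hm => hh.grade_succ_eq_bot (hk.trans hm)) p hp

lemma eq_span_of_grade_le {S : Set PL} (hS : S ⊆ h) (h1 : 1 ∈ S) (hx : X 0 ∈ S) (hz : X 2 ∈ S)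
    (h₀ : h ⊓ Lgrade 0 ≤ Submodule.span ℝ S) (h₁ : h ⊓ Lgrade 1 ≤ Submodule.span ℝ S)
    (h₂ : h ⊓ Lgrade 2 ≤ Submodule.span ℝ S) (h₃ : h ⊓ Lgrade 3 = ⊥) :
    h = Submodule.span ℝ S := by
  refine le_antisymm (hh.graded.le.trans (iSup_le fun p => ?_)) (Submodule.span_le.mpr hS)
  have mem {f : PL} (hf : f ∈ S) (a : ℝ) : a • f ∈ Submodule.span ℝ S :=
    Submodule.smul_mem _ a (Submodule.subset_span hf)
  rcases lt_or_ge p (-2) with hp | hp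
  · rintro f ⟨-, hf⟩
    exact eq_zero_of_mem_Lgrade hp hf ▸ zero_mem _
  rcases le_or_gt 3 p with hp' | hp'
  · exact (hh.grade_eq_bot_of_le (by decide) h₃ hp').le.trans bot_le
  interval_cases p
  · rintro f ⟨-, hf⟩
    obtain ⟨a, rfl⟩ := exists_eq_smul_one hf
    exact mem h1 a
  · rintro f ⟨-, hf⟩
    obtain ⟨a, b, rfl⟩ := exists_eq_linForm hf
    exact add_mem (mem hx a) (mem hz b)
  · exact h₀
  · exact h₁
  · exact h₂

lemma eq_span_of_grade_one_eq_bot {S : Set PL} (hS : S ⊆ h) (h1 : 1 ∈ S) (hx : X 0 ∈ S)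
    (hz : X 2 ∈ S) (h₀ : h ⊓ Lgrade 0 ≤ Submodule.span ℝ S) (h₁ : h ⊓ Lgrade 1 = ⊥) :
    h = Submodule.span ℝ S := by
  have hbot {p : ℤ} (hp : 1 ≤ p) : h ⊓ Lgrade p = ⊥ := hh.grade_eq_bot_of_le (by decide) h₁ hp
  exact hh.eq_span_of_grade_le hS h1 hx hz h₀ (h₁ ▸ bot_le) (hbot one_le_two ▸ bot_le)
    (hbot (by decide))

end IsContact

/-! ### Graded embeddings and the substitution automorphisms -/

/-- An injective linear endomorphism of `L` that preserves the bracket and the grading, the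
latter being encoded by fixing the grading element. -/
structure IsGradedEmbedding (F : PL →ₗ[ℝ] PL) : Prop where
  injective : Function.Injective F
  map_lagr : ∀ f g, F (lagr f g) = lagr (F f) (F g)
  map_euler : F euler = euler

/-- An isomorphism of Lie algebras between two subspaces of `L` that matches their graded
components; the bracket condition is vacuous where the bracket leaves the subspace. -/
structure IsGradedIso {h k : Submodule ℝ PL} (φ : h ≃ₗ[ℝ] k) : Prop where
  map_lagr : ∀ u v w : h, (w : PL) = lagr (u : PL) (v : PL) →
    (φ w : PL) = lagr (φ u : PL) (φ v : PL)
  mem_Lgrade_iff : ∀ (p : ℤ) (u : h), (u : PL) ∈ Lgrade p ↔ (φ u : PL) ∈ Lgrade p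

lemma IsGradedIso.symm_trans {h k l : Submodule ℝ PL} {φ : h ≃ₗ[ℝ] k} {ψ : h ≃ₗ[ℝ] l}
    (hφ : IsGradedIso φ) (hψ : IsGradedIso ψ) (hclosed : ∀ f ∈ h, ∀ g ∈ h, lagr f g ∈ h) :
    IsGradedIso (φ.symm.trans ψ) where
  map_lagr u v w huvw := by
    refine hψ.map_lagr _ _ _ ?_
    let b : h := ⟨_, hclosed _ (φ.symm u).2 _ (φ.symm v).2⟩
    have hb : φ b = w := Subtype.ext <| by
      rw [hφ.map_lagr (φ.symm u) (φ.symm v) b rfl, φ.apply_symm_apply, φ.apply_symm_apply, huvw]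
    exact congrArg Subtype.val (φ.symm_apply_eq.mpr hb.symm)
  mem_Lgrade_iff p u := by
    rw [LinearEquiv.trans_apply, ← hψ.mem_Lgrade_iff, hφ.mem_Lgrade_iff, φ.apply_symm_apply]

namespace IsGradedEmbedding

variable {F : PL →ₗ[ℝ] PL} {h : Submodule ℝ PL}

lemma id : IsGradedEmbedding LinearMap.id :=
  ⟨Function.injective_id, fun _ _ => rfl, rfl⟩

lemma mem_Lgrade_iff (hF : IsGradedEmbedding F) : F f ∈ Lgrade p ↔ f ∈ Lgrade p := by
  rw [mem_Lgrade, mem_Lgrade, ← hF.injective.eq_iff (b := (p : ℝ) • f), hF.map_lagr,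
    hF.map_euler, map_smul]

lemma isGradedIso (hF : IsGradedEmbedding F) (h : Submodule ℝ PL) :
    IsGradedIso (h.equivMapOfInjective F hF.injective) where
  map_lagr u v w huvw := by
    simp only [Submodule.coe_equivMapOfInjective_apply, huvw, hF.map_lagr]
  mem_Lgrade_iff _ _ := hF.mem_Lgrade_iff.symm

lemma map_inf_Lgrade (hF : IsGradedEmbedding F) :
    (h ⊓ Lgrade p).map F = h.map F ⊓ Lgrade p := by
  ext f
  constructor
  · rintro ⟨g, hg, rfl⟩
    exact ⟨⟨g, hg.1, rfl⟩, hF.mem_Lgrade_iff.mpr hg.2⟩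
  · rintro ⟨⟨g, hg, rfl⟩, hgp⟩
    exact ⟨g, ⟨hg, hF.mem_Lgrade_iff.mp hgp⟩, rfl⟩

lemma isContact_map (hF : IsGradedEmbedding F) (hh : IsContact h) (hx : X 0 ∈ h.map F)
    (hz : X 2 ∈ h.map F) : IsContact (h.map F) where
  lagr_mem := by
    rintro _ ⟨f, hf, rfl⟩ _ ⟨g, hg, rfl⟩
    exact ⟨_, hh.lagr_mem f hf g hg, hF.map_lagr f g⟩
  graded := by
    conv_lhs => rw [hh.graded, Submodule.map_iSup]
    exact iSup_congr fun p => hF.map_inf_Lgrade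
  x_mem := hx
  z_mem := hz

end IsGradedEmbedding

/-- The substitution `x ↦ x + 2sz`, `y ↦ μ(y + sz²)`, `z ↦ μz`, which multiplies both the
Lagrange bracket and the grading element by `μ`. -/
def contactSubst (s μ : ℝ) : PL →ₐ[ℝ] PL :=
  aeval ![X 0 + (2 * s) • X 2, μ • (X 1 + s • X 2 ^ 2), μ • X 2]

lemma contactSubst_x (s μ : ℝ) : contactSubst s μ (X 0) = X 0 + (2 * s) • X 2 := by
  simp only [contactSubst, aeval_X, Matrix.cons_val]

lemma contactSubst_y (s μ : ℝ) : contactSubst s μ (X 1) = μ • (X 1 + s • X 2 ^ 2) := by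
  simp only [contactSubst, aeval_X, Matrix.cons_val]

lemma contactSubst_z (s μ : ℝ) : contactSubst s μ (X 2) = μ • X 2 := by
  simp only [contactSubst, aeval_X, Matrix.cons_val]

lemma contactSubst_euler (s μ : ℝ) : contactSubst s μ euler = μ • euler := by
  rw [map_sub, map_mul, map_mul, map_ofNat, contactSubst_x, contactSubst_y, contactSubst_z]
  algebra

lemma pderiv_contactSubst (s μ : ℝ) (i : Fin 3) (f : PL) :
    pderiv i (contactSubst s μ f) =
      contactSubst s μ (pderiv 0 f) * pderiv i (X 0 + (2 * s) • X 2) +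
      contactSubst s μ (pderiv 1 f) * pderiv i (μ • (X 1 + s • X 2 ^ 2)) +
      contactSubst s μ (pderiv 2 f) * pderiv i (μ • X 2) := by
  rw [pderiv_algHom, Fin.sum_univ_three, contactSubst_x, contactSubst_y, contactSubst_z]

lemma lagr_contactSubst (s μ : ℝ) (f g : PL) :
    lagr (contactSubst s μ f) (contactSubst s μ g) = μ • contactSubst s μ (lagr f g) := by
  simp only [lagr, pderiv_contactSubst, contactSubst_z, map_add, map_sub, map_mul, sq, pderiv_mul,
    smul_eq_C_mul, map_ofNat C, pderiv_ofNat, pderiv_C, pderiv_X_self, pderiv_X_of_ne, ne_eq,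
    Fin.isValue, Fin.reduceEq, not_false_eq_true]
  ring

lemma contactSubst_leftInverse (s : ℝ) {μ : ℝ} (hμ : μ ≠ 0) :
    Function.LeftInverse (contactSubst (-s / μ) μ⁻¹) (contactSubst s μ) := by
  have hcomp : (contactSubst (-s / μ) μ⁻¹).comp (contactSubst s μ) = AlgHom.id ℝ PL := by
    refine algHom_ext fun i => ?_
    rw [AlgHom.comp_apply, AlgHom.id_apply]
    match i with
    | 0 =>
      rw [contactSubst_x, map_add, map_smul, contactSubst_x, contactSubst_z]
      match_scalars <;> field_simp
      ring
    | 1 =>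
      rw [contactSubst_y, map_smul, map_add, map_smul, map_pow, contactSubst_y, contactSubst_z,
        smul_pow]
      match_scalars <;> field_simp
      ring
    | 2 => rw [contactSubst_z, map_smul, contactSubst_z, smul_smul, mul_inv_cancel₀ hμ, one_smul]
  exact AlgHom.congr_fun hcomp

/-- The automorphism `f ↦ μ⁻¹ f(x + 2sz, μ(y + sz²), μz)` of the graded Lie algebra `L`. -/
def contactAut (s μ : ℝ) : PL →ₗ[ℝ] PL :=
  μ⁻¹ • (contactSubst s μ).toLinearMap

lemma contactAut_apply (s μ : ℝ) (f : PL) : contactAut s μ f = μ⁻¹ • contactSubst s μ f :=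
  rfl

lemma isGradedEmbedding_contactAut (s : ℝ) {μ : ℝ} (hμ : μ ≠ 0) :
    IsGradedEmbedding (contactAut s μ) where
  injective := (smul_right_injective PL (inv_ne_zero hμ)).comp
    (contactSubst_leftInverse s hμ).injective
  map_lagr f g := by
    simp only [contactAut_apply, lagr_smul_left, lagr_smul_right, lagr_contactSubst,
      inv_smul_smul₀ hμ]
  map_euler := by rw [contactAut_apply, contactSubst_euler, inv_smul_smul₀ hμ]

lemma contactAut_z (s : ℝ) {μ : ℝ} (hμ : μ ≠ 0) : contactAut s μ (X 2) = X 2 := by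
  rw [contactAut_apply, contactSubst_z, inv_smul_smul₀ hμ]

lemma contactAut_x (s : ℝ) {μ : ℝ} (hμ : μ ≠ 0) :
    contactAut s μ (linForm μ (-(2 * s))) = X 0 := by
  rw [map_add, map_smul, map_smul, contactAut_z s hμ, contactAut_apply, smul_inv_smul₀ hμ,
    contactSubst_x]
  algebra

lemma contactAut_quadForm {c : Fin 3 → ℝ} (hc : 4 * c 0 * c 2 - c 1 ^ 2 = 4) :
    contactAut (-c 1 / 4) (c 0) (quadForm c) = X 0 ^ 2 + X 2 ^ 2 := by
  have h0 : c 0 ≠ 0 := by rintro h; rw [h] at hc; nlinarith [sq_nonneg (c 1)]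
  rw [contactAut_apply, quadForm_apply, map_add, map_add, map_smul, map_smul, map_smul, map_mul,
    map_pow, map_pow, contactSubst_x, contactSubst_z, inv_smul_eq_iff₀ h0]
  have hz : (4 * c 0 * c 2 - c 1 ^ 2) • (X 2 ^ 2 : PL) = (4 : ℝ) • X 2 ^ 2 := by rw [hc]
  linear_combination (norm := algebra) (c 0 / 4) • hz

lemma IsContact.map_contactAut {h : Submodule ℝ PL} (hh : IsContact h) (s : ℝ) {μ : ℝ}
    (hμ : μ ≠ 0) : IsContact (h.map (contactAut s μ)) :=
  (isGradedEmbedding_contactAut s hμ).isContact_map hh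
    ⟨_, hh.linForm_mem _ _, contactAut_x s hμ⟩ ⟨_, hh.z_mem, contactAut_z s hμ⟩

/-! ### Subalgebras of the Lie algebra of binary quadratic forms -/

/-- The value at `(s, t)` of the binary quadratic form with coefficient vector `q`. -/
def quadEval (q : Fin 3 → ℝ) (s t : ℝ) : ℝ := q 0 * s ^ 2 + q 1 * (s * t) + q 2 * t ^ 2

/-- The coefficient vector of the Lagrange bracket of two binary quadratic forms. -/
def quadBracket (a b : Fin 3 → ℝ) : Fin 3 → ℝ :=
  ![2 * (a 0 * b 1 - a 1 * b 0), 4 * (a 0 * b 2 - a 2 * b 0), 2 * (a 1 * b 2 - a 2 * b 1)]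

/-- A space of binary quadratic forms is zero-free if its members have no common zero on the real
projective line. -/
def ZeroFree (S : Submodule ℝ (Fin 3 → ℝ)) : Prop :=
  ∀ s t : ℝ, s ≠ 0 ∨ t ≠ 0 → ∃ q ∈ S, quadEval q s t ≠ 0

section Quadratics

variable {S : Submodule ℝ (Fin 3 → ℝ)}

-- Two non-commuting members span a Borel subalgebra, whose forms share a double point.
lemma ZeroFree.quadBracket_eq_zero (hS : ZeroFree S) (htop : S ≠ ⊤)
    (hbr : ∀ a ∈ S, ∀ b ∈ S, quadBracket a b ∈ S) {a b : Fin 3 → ℝ} (ha : a ∈ S) (hb : b ∈ S) :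
    quadBracket a b = 0 := by
  set u := a 0 * b 1 - a 1 * b 0 with hu
  set v := a 0 * b 2 - a 2 * b 0 with hv
  set w := a 1 * b 2 - a 2 * b 1 with hw
  have plane {r : Fin 3 → ℝ} (hr : r ∈ S) : r 0 * w - r 1 * v + r 2 * u = 0 := by
    have := det_eq_zero_of_row_mem (A := Matrix.of ![a, b, r]) htop
      (Fin.forall_fin_succ.mpr ⟨ha, Fin.forall_fin_two.mpr ⟨hb, hr⟩⟩)
    rw [Matrix.det_fin_three] at this
    simp only [Matrix.of_apply, Matrix.cons_val] at this
    linear_combination this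
  have double_point : v ^ 2 = u * w := by
    have := plane (hbr a ha b hb)
    simp only [quadBracket, Matrix.cons_val] at this
    linear_combination -this / 4
  have hu0 : u = 0 := by
    by_contra hne
    obtain ⟨r, hr, hr0⟩ := hS (-v) u (Or.inr hne)
    refine hr0 ?_
    rw [quadEval]
    linear_combination u * plane hr + r 0 * double_point
  have hv0 : v = 0 := by rwa [hu0, zero_mul, sq_eq_zero_iff] at double_point
  have hw0 : w = 0 := by
    by_contra hne
    obtain ⟨r, hr, hr0⟩ := hS 1 0 (Or.inl one_ne_zero)
    refine hr0 ?_
    have := plane hr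
    rw [hu0, hv0, mul_zero, mul_zero, sub_zero, add_zero] at this
    rw [quadEval, (mul_eq_zero_iff_right hne).mp this]
    ring
  rw [quadBracket, ← hu, ← hv, ← hw, hu0, hv0, hw0]
  simp

lemma exists_quadEval_eq_zero {c : Fin 3 → ℝ} (hdisc : 4 * c 0 * c 2 - c 1 ^ 2 ≤ 0) :
    ∃ s t, (s ≠ 0 ∨ t ≠ 0) ∧ quadEval c s t = 0 := by
  rcases eq_or_ne (c 0) 0 with hc0 | hc0
  · exact ⟨1, 0, Or.inl one_ne_zero, by rw [quadEval, hc0]; ring⟩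
  set e := √(c 1 ^ 2 - 4 * c 0 * c 2)
  have hsq : e ^ 2 = c 1 ^ 2 - 4 * c 0 * c 2 := Real.sq_sqrt (by linarith)
  refine ⟨-c 1 + e, 2 * c 0, Or.inr (mul_ne_zero two_ne_zero hc0), ?_⟩
  rw [quadEval]
  linear_combination c 0 * hsq

lemma exists_smul_discr_eq_four {c : Fin 3 → ℝ} (hdisc : 0 < 4 * c 0 * c 2 - c 1 ^ 2) :
    ∃ k : ℝ, k ≠ 0 ∧ 4 * (k • c) 0 * (k • c) 2 - (k • c) 1 ^ 2 = 4 := by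
  set e := √(4 * c 0 * c 2 - c 1 ^ 2)
  have hsq : e ^ 2 = 4 * c 0 * c 2 - c 1 ^ 2 := Real.sq_sqrt hdisc.le
  have he : e ≠ 0 := (Real.sqrt_pos.mpr hdisc).ne'
  refine ⟨2 / e, div_ne_zero two_ne_zero he, ?_⟩
  simp only [Pi.smul_apply, smul_eq_mul]
  field_simp
  linear_combination -4 * hsq

lemma ZeroFree.exists_definite (hS : ZeroFree S)
    (hab : ∀ a ∈ S, ∀ b ∈ S, quadBracket a b = 0) :
    ∃ c ∈ S, 4 * c 0 * c 2 - c 1 ^ 2 = 4 ∧ S ≤ Submodule.span ℝ {c} := by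
  obtain ⟨c, hc, hc10⟩ := hS 1 0 (Or.inl one_ne_zero)
  have hc0 : c 0 ≠ 0 := by simpa [quadEval] using hc10
  have proportional {r : Fin 3 → ℝ} (hr : r ∈ S) : r = (r 0 / c 0) • c := by
    have h := hab c hc r hr
    have h0 := congrFun h 0
    have h1 := congrFun h 1
    simp only [quadBracket, Matrix.cons_val, Pi.zero_apply] at h0 h1
    ext i
    match i with
    | 0 => simp only [Pi.smul_apply, smul_eq_mul]; field_simp
    | 1 => simp only [Pi.smul_apply, smul_eq_mul]; field_simp; linarith
    | 2 => simp only [Pi.smul_apply, smul_eq_mul]; field_simp; linarith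
  have hdisc : 0 < 4 * c 0 * c 2 - c 1 ^ 2 := by
    by_contra! hle
    obtain ⟨s, t, hst, hzero⟩ := exists_quadEval_eq_zero hle
    obtain ⟨r, hr, hr0⟩ := hS s t hst
    refine hr0 ?_
    rw [proportional hr]
    simp only [quadEval, Pi.smul_apply, smul_eq_mul] at hzero ⊢
    linear_combination r 0 / c 0 * hzero
  obtain ⟨k, hk, hk4⟩ := exists_smul_discr_eq_four hdisc
  refine ⟨k • c, S.smul_mem k hc, hk4, fun r hr => ?_⟩
  rw [Submodule.span_singleton_smul_eq hk.isUnit, proportional hr]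
  exact Submodule.smul_mem _ _ (Submodule.mem_span_singleton_self c)

end Quadratics

lemma quadForm_mem_Lgrade (q : Fin 3 → ℝ) : quadForm q ∈ Lgrade 0 := by
  rw [mem_Lgrade, lagr_euler]
  simp only [quadForm_apply, map_add, Derivation.map_smul, sq, pderiv_mul,
    pderiv_X_self, pderiv_X_of_ne, ne_eq, Fin.isValue, Fin.reduceEq, not_false_eq_true]
  algebra

lemma lagr_quadForm_add (a b : Fin 3 → ℝ) (d e : ℝ) :
    lagr (quadForm a + d • euler) (quadForm b + e • euler) = quadForm (quadBracket a b) := by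
  have h (q : Fin 3 → ℝ) : lagr euler (quadForm q) = 0 := by
    rw [mem_Lgrade.mp (quadForm_mem_Lgrade q), Int.cast_zero, zero_smul]
  rw [lagr_add_left, lagr_add_right, lagr_add_right, lagr_smul_left, lagr_smul_left,
    lagr_smul_right, lagr_smul_right, h, lagr_skew _ euler, h, lagr_self]
  simp only [lagr, quadForm_apply, quadBracket, map_add, Derivation.map_smul, sq, pderiv_mul,
    pderiv_X_self, pderiv_X_of_ne, ne_eq, Fin.isValue, Fin.reduceEq, not_false_eq_true,
    Matrix.cons_val]
  algebra

lemma lagr_quadForm_add_linForm (q : Fin 3 → ℝ) (d a b : ℝ) :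
    lagr (quadForm q + d • euler) (linForm a b) =
      linForm (2 * q 0 * b - q 1 * a - d * a) (q 1 * b - 2 * q 2 * a - d * b) := by
  simp only [lagr, quadForm_apply, map_add, map_sub, Derivation.map_smul, sq, pderiv_mul,
    pderiv_ofNat, pderiv_X_self, pderiv_X_of_ne, ne_eq, Fin.isValue, Fin.reduceEq,
    not_false_eq_true]
  algebra

lemma lagr_x_linForm (a b : ℝ) : lagr (X 0) (linForm a b) = b • 1 := by
  rw [lagr_add_right, lagr_smul_right, lagr_smul_right, lagr_self, lagr_x_z, smul_zero, zero_add]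

lemma lagr_z_linForm (a b : ℝ) : lagr (X 2) (linForm a b) = (-a) • 1 := by
  rw [lagr_add_right, lagr_smul_right, lagr_smul_right, lagr_self, lagr_skew, lagr_x_z, smul_zero,
    add_zero, smul_neg, neg_smul]

lemma smul_one_eq_zero {a : ℝ} : a • (1 : PL) = 0 ↔ a = 0 :=
  smul_eq_zero_iff_left one_ne_zero

lemma eq_zero_of_quadForm_add_eq_zero {q : Fin 3 → ℝ} {d : ℝ}
    (h : quadForm q + d • euler = 0) : d = 0 := by
  have h1 := congrArg (lagr 1) h
  simp only [lagr_one, quadForm_apply, map_add, map_sub, map_zero, Derivation.map_smul, sq,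
    pderiv_mul, pderiv_ofNat, pderiv_X_self, pderiv_X_of_ne, ne_eq, Fin.isValue, Fin.reduceEq,
    not_false_eq_true] at h1
  refine smul_one_eq_zero.mp ?_
  linear_combination (norm := algebra) (1 / 2 : ℝ) • h1

lemma lagr_one_euler : lagr 1 euler = 2 := by
  rw [lagr_one_eq_sub, lagr_x_euler, lagr_z_euler, lagr_skew (X 2), lagr_x_z]
  norm_num

lemma linForm_eq_zero {a b : ℝ} : linForm a b = 0 ↔ a = 0 ∧ b = 0 := by
  refine ⟨fun h => ⟨?_, ?_⟩, fun ⟨ha, hb⟩ => by simp [linForm, ha, hb]⟩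
  · rw [← neg_eq_zero, ← smul_one_eq_zero, ← lagr_z_linForm a b, h, lagr_zero_right]
  · rw [← smul_one_eq_zero, ← lagr_x_linForm a b, h, lagr_zero_right]

lemma linForm_mem_span_singleton {s t a b : ℝ} (hst : s ≠ 0 ∨ t ≠ 0) (h : a * s + b * t = 0) :
    linForm a b ∈ Submodule.span ℝ {linForm (-t) s} := by
  have hN : s ^ 2 + t ^ 2 ≠ 0 := by
    rcases hst with h | h <;> positivity
  refine Submodule.mem_span_singleton.mpr ⟨(s * b - t * a) / (s ^ 2 + t ^ 2), ?_⟩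
  have ha : (s * b - t * a) / (s ^ 2 + t ^ 2) * -t = a := by
    field_simp
    linear_combination -s * h
  have hb : (s * b - t * a) / (s ^ 2 + t ^ 2) * s = b := by
    field_simp
    linear_combination -t * h
  rw [smul_add, smul_smul, smul_smul, ha, hb]

/-- The binary quadratic forms that occur, up to a multiple of the grading element, in the degree
zero component of `h`: the image of `h₀` under the projection to `sl₂`. -/
def quadParts (h : Submodule ℝ PL) : Submodule ℝ (Fin 3 → ℝ) :=
  (h ⊔ Submodule.span ℝ {euler}).comap quadForm

lemma mem_quadParts {h : Submodule ℝ PL} {q : Fin 3 → ℝ} :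
    q ∈ quadParts h ↔ ∃ d : ℝ, quadForm q + d • euler ∈ h := by
  rw [quadParts, Submodule.mem_comap, Submodule.mem_sup]
  simp only [Submodule.mem_span_singleton, exists_exists_eq_and]
  constructor
  · rintro ⟨f, hf, d, hd⟩
    exact ⟨-d, by rwa [← hd, neg_smul, add_neg_cancel_right]⟩
  · rintro ⟨d, hd⟩
    exact ⟨_, hd, -d, by rw [neg_smul, add_neg_cancel_right]⟩

lemma zeroFree_quadParts {h : Submodule ℝ PL}
    (hirr : ∀ W : Submodule ℝ PL, W ≤ Submodule.span ℝ ({X 0, X 2} : Set PL) →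
      (∀ u ∈ h ⊓ Lgrade 0, ∀ w ∈ W, lagr u w ∈ W) →
      W = ⊥ ∨ W = Submodule.span ℝ ({X 0, X 2} : Set PL)) :
    ZeroFree (quadParts h) := by
  intro s t hst
  by_contra! hzero
  have invariant : ∀ u ∈ h ⊓ Lgrade 0, ∀ w ∈ Submodule.span ℝ {linForm (-t) s},
      lagr u w ∈ Submodule.span ℝ {linForm (-t) s} := by
    rintro u ⟨hu, hu0⟩ w hw
    obtain ⟨r, rfl⟩ := Submodule.mem_span_singleton.mp hw
    obtain ⟨q, d, rfl⟩ := exists_eq_quadForm_add hu0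
    have hq := hzero q (mem_quadParts.mpr ⟨d, hu⟩)
    rw [lagr_smul_right, lagr_quadForm_add_linForm]
    refine Submodule.smul_mem _ r (linForm_mem_span_singleton hst ?_)
    rw [quadEval] at hq
    linear_combination 2 * hq
  have hne : linForm (-t) s ≠ 0 := fun h0 => by
    obtain ⟨ht, hs⟩ := linForm_eq_zero.mp h0
    exact hst.elim (· hs) (· (neg_eq_zero.mp ht))
  have hle : Submodule.span ℝ {linForm (-t) s} ≤ Submodule.span ℝ {X 0, X 2} :=
    (Submodule.span_singleton_le_iff_mem _ _).mpr (Submodule.mem_span_pair.mpr ⟨-t, s, rfl⟩)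
  rcases hirr _ hle invariant with hW | hW
  · exact hne (Submodule.span_singleton_eq_bot.mp hW)
  · have hx : X 0 ∈ Submodule.span ℝ {linForm (-t) s} :=
      hW ▸ Submodule.subset_span (Set.mem_insert _ _)
    have hz : X 2 ∈ Submodule.span ℝ {linForm (-t) s} :=
      hW ▸ Submodule.subset_span (Set.mem_insert_of_mem _ rfl)
    obtain ⟨a, ha⟩ := Submodule.mem_span_singleton.mp hx
    obtain ⟨b, hb⟩ := Submodule.mem_span_singleton.mp hz
    have := lagr_x_z
    rw [← ha, ← hb, lagr_smul_left, lagr_smul_right, lagr_self, smul_zero, smul_zero] at this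
    exact zero_ne_one this

lemma IsContact.quadForm_quadBracket_mem {h : Submodule ℝ PL} (hh : IsContact h)
    {a b : Fin 3 → ℝ} (ha : a ∈ quadParts h) (hb : b ∈ quadParts h) :
    quadForm (quadBracket a b) ∈ h := by
  obtain ⟨d, hd⟩ := mem_quadParts.mp ha
  obtain ⟨e, he⟩ := mem_quadParts.mp hb
  exact lagr_quadForm_add a b d e ▸ hh.lagr_mem _ hd _ he

lemma IsContact.quadForm_mem_or_exists_definite {h : Submodule ℝ PL} (hh : IsContact h)
    (hS : ZeroFree (quadParts h)) :
    (∀ q, quadForm q ∈ h) ∨ ∃ c ∈ quadParts h, 4 * c 0 * c 2 - c 1 ^ 2 = 4 ∧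
      quadParts h ≤ Submodule.span ℝ {c} := by
  by_cases htop : quadParts h = ⊤
  · refine Or.inl fun q => ?_
    have hmem (a b : Fin 3 → ℝ) : quadForm (quadBracket a b) ∈ h :=
      hh.quadForm_quadBracket_mem (htop ▸ Submodule.mem_top) (htop ▸ Submodule.mem_top)
    have key : q = (q 0 / 2) • quadBracket ![1, 0, 0] ![0, 1, 0] +
        (q 1 / 4) • quadBracket ![1, 0, 0] ![0, 0, 1] +
        (q 2 / 2) • quadBracket ![0, 1, 0] ![0, 0, 1] := by
      ext i
      fin_cases i <;> simp [quadBracket]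
    rw [key, map_add, map_add, map_smul, map_smul, map_smul]
    exact add_mem (add_mem (h.smul_mem _ (hmem _ _)) (h.smul_mem _ (hmem _ _)))
      (h.smul_mem _ (hmem _ _))
  · refine Or.inr (hS.exists_definite fun a ha b hb => hS.quadBracket_eq_zero htop ?_ ha hb)
    exact fun a ha b hb => mem_quadParts.mpr
      ⟨0, by rw [zero_smul, add_zero]; exact hh.quadForm_quadBracket_mem ha hb⟩

/-! ### The case `h₀ ⊇ sl₂` -/

lemma lagr_x_mul (f g : PL) : lagr (X 0) (f * g) = lagr (X 0) f * g + f * lagr (X 0) g := by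
  rw [lagr_mul, pderiv_X_of_ne (by decide), mul_zero, add_zero]

lemma lagr_z_mul (f g : PL) : lagr (X 2) (f * g) = lagr (X 2) f * g + f * lagr (X 2) g := by
  rw [lagr_mul, pderiv_X_of_ne (by decide), mul_zero, add_zero]

lemma lagr_x_sq (f : PL) : lagr (X 0 ^ 2) f = 2 * X 0 * pderiv 2 f + X 0 ^ 2 * pderiv 1 f := by
  simp only [lagr, sq, pderiv_mul, pderiv_X_self, pderiv_X_of_ne, ne_eq, Fin.isValue,
    Fin.reduceEq, not_false_eq_true]
  ring

lemma lagr_z_sq (f : PL) : lagr (X 2 ^ 2) f = -(2 * X 2 * pderiv 0 f + X 2 ^ 2 * pderiv 1 f) := by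
  simp only [lagr, sq, pderiv_mul, pderiv_X_self, pderiv_X_of_ne, ne_eq, Fin.isValue,
    Fin.reduceEq, not_false_eq_true]
  ring

lemma lagr_x_sq_cubicForm_add (c : Fin 4 → ℝ) (a b : ℝ) :
    lagr (X 0 ^ 2) (cubicForm c + linForm a b * euler) =
      cubicForm ![2 * c 1, 4 * c 2, 6 * c 3, 0] + linForm (2 * b) 0 * euler := by
  rw [lagr_x_sq]
  simp only [cubicForm, map_add, map_sub, Derivation.map_smul, pow_succ, pow_zero, one_mul,
    pderiv_mul, pderiv_ofNat, pderiv_X_self, pderiv_X_of_ne, ne_eq, Fin.isValue, Fin.reduceEq,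
    not_false_eq_true, Matrix.cons_val]
  algebra

lemma lagr_z_sq_cubicForm_add (c : Fin 4 → ℝ) (a b : ℝ) :
    lagr (X 2 ^ 2) (cubicForm c + linForm a b * euler) =
      cubicForm ![0, -6 * c 0, -4 * c 1, -2 * c 2] + linForm 0 (-2 * a) * euler := by
  rw [lagr_z_sq]
  simp only [cubicForm, map_add, map_sub, Derivation.map_smul, pow_succ, pow_zero, one_mul,
    pderiv_mul, pderiv_ofNat, pderiv_X_self, pderiv_X_of_ne, ne_eq, Fin.isValue, Fin.reduceEq,
    not_false_eq_true, Matrix.cons_val]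
  algebra

lemma lagr_x_sq_mul_z_x_pow (n : ℕ) :
    lagr (X 0 ^ 2 * X 2) (X 0 ^ n) = (-n : ℝ) • X 0 ^ (n + 1) := by
  have hn : X 0 * pderiv 0 (X 0 ^ n : PL) = (n : PL) * X 0 ^ n := by
    rw [X_pow_eq_monomial, X_mul_pderiv_monomial, Finsupp.single_eq_same, nsmul_eq_mul]
  have h1 : pderiv 1 (X 0 ^ n : PL) = 0 := by
    rw [pderiv_pow, pderiv_X_of_ne (by decide), mul_zero]
  have h2 : pderiv 2 (X 0 ^ n : PL) = 0 := by
    rw [pderiv_pow, pderiv_X_of_ne (by decide), mul_zero]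
  simp only [lagr, h1, h2, sq, pderiv_mul, pderiv_X_self, pderiv_X_of_ne, ne_eq, Fin.isValue,
    Fin.reduceEq, not_false_eq_true]
  rw [smul_eq_C_mul, map_neg, map_natCast]
  linear_combination -X 0 * hn

lemma lagr_x_sq_sq_cubicForm_add (c : Fin 4 → ℝ) (a b : ℝ) :
    lagr (X 0 ^ 2) (lagr (X 0 ^ 2) (cubicForm c + linForm a b * euler)) =
      (8 * c 2) • X 0 ^ 3 + (24 * c 3) • (X 0 ^ 2 * X 2) := by
  rw [lagr_x_sq_cubicForm_add, lagr_x_sq_cubicForm_add]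
  simp only [cubicForm, linForm, Matrix.cons_val]
  algebra

lemma lagr_x_sq_sq_z_sq_sq_cubicForm_add (c : Fin 4 → ℝ) (a b : ℝ) :
    lagr (X 0 ^ 2) (lagr (X 0 ^ 2)
        (lagr (X 2 ^ 2) (lagr (X 2 ^ 2) (cubicForm c + linForm a b * euler)))) =
      (192 * c 0) • X 0 ^ 3 + (192 * c 1) • (X 0 ^ 2 * X 2) := by
  rw [lagr_z_sq_cubicForm_add, lagr_z_sq_cubicForm_add, lagr_x_sq_sq_cubicForm_add]
  simp only [Matrix.cons_val]
  algebra

lemma lagr_z_sq_x_cube : lagr (X 2 ^ 2) (X 0 ^ 3) = (-6 : ℝ) • (X 0 ^ 2 * X 2) := by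
  rw [lagr_z_sq, pderiv_pow, pderiv_pow, pderiv_X_self, pderiv_X_of_ne (by decide)]
  algebra

lemma lagr_x_sq_smul_x_cube_add (a b : ℝ) :
    lagr (X 0 ^ 2) (a • X 0 ^ 3 + b • (X 0 ^ 2 * X 2)) = (2 * b) • X 0 ^ 3 := by
  simp only [lagr_x_sq, map_add, Derivation.map_smul, pderiv_mul, pderiv_pow, pderiv_X_self,
    pderiv_X_of_ne, ne_eq, Fin.isValue, Fin.reduceEq, not_false_eq_true]
  algebra

lemma lagr_x_linForm_mul_euler (a b : ℝ) :
    lagr (X 0) (linForm a b * euler) = b • euler + linForm a b * X 0 := by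
  rw [lagr_x_mul, lagr_x_linForm, lagr_x_euler, smul_one_mul]

lemma lagr_z_linForm_mul_euler (a b : ℝ) :
    lagr (X 2) (linForm a b * euler) = (-a) • euler + linForm a b * X 2 := by
  rw [lagr_z_mul, lagr_z_linForm, lagr_z_euler, smul_one_mul]

lemma lagr_x_sq_linForm_mul_euler (a b : ℝ) :
    lagr (X 0 ^ 2) (linForm a b * euler) = (2 * b) • (X 0 * euler) := by
  have := lagr_x_sq_cubicForm_add 0 a b
  simpa [cubicForm, linForm] using this

lemma lagr_z_sq_linForm_mul_euler (a b : ℝ) :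
    lagr (X 2 ^ 2) (linForm a b * euler) = (-2 * a) • (X 2 * euler) := by
  have := lagr_z_sq_cubicForm_add 0 a b
  simpa [cubicForm, linForm] using this

lemma lagr_x_mul_euler_z_mul_euler : lagr (X 0 * euler) (X 2 * euler) = euler ^ 2 := by
  simp only [lagr, map_sub, pderiv_mul, pderiv_ofNat, pderiv_X_self, pderiv_X_of_ne, ne_eq,
    Fin.isValue, Fin.reduceEq, not_false_eq_true]
  ring

lemma lagr_x_euler_sq : lagr (X 0) (euler ^ 2) = (2 : ℝ) • (X 0 * euler) := by
  rw [sq, lagr_x_mul, lagr_x_euler]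
  algebra

lemma lagr_z_euler_sq : lagr (X 2) (euler ^ 2) = (2 : ℝ) • (X 2 * euler) := by
  rw [sq, lagr_z_mul, lagr_z_euler]
  algebra

lemma lagr_one_euler_sq : lagr 1 (euler ^ 2) = (4 : ℝ) • euler := by
  rw [sq, lagr_mul, lagr_one_euler, pderiv_one]
  algebra

lemma eq_smul_euler_sq {a b a' b' : ℝ} (hf : f ∈ Lgrade 2)
    (hx : lagr (X 0) f = linForm a b * euler) (hz : lagr (X 2) f = linForm a' b' * euler) :
    f = ((a + b') / 4) • euler ^ 2 := by
  have hrec := smul_eq_of_mem_Lgrade hf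
  rw [lagr_one_eq_sub, hx, hz, lagr_x_linForm_mul_euler, lagr_z_linForm_mul_euler] at hrec
  push_cast at hrec
  linear_combination (norm := algebra) (1 / 4 : ℝ) • hrec

lemma eq_zero_of_lagr_eq_smul_euler_sq {a b : ℝ} (hf : f ∈ Lgrade 3)
    (hx : lagr (X 0) f = a • euler ^ 2) (hz : lagr (X 2) f = b • euler ^ 2) : f = 0 := by
  have hone : lagr 1 f = linForm (2 * b) (-2 * a) * euler := by
    rw [lagr_one_eq_sub, hx, hz, lagr_smul_right, lagr_smul_right, lagr_x_euler_sq,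
      lagr_z_euler_sq]
    algebra
  have hx₁ := lagr_one_lagr_x f
  rw [hx, hone, lagr_smul_right, lagr_one_euler_sq, lagr_x_linForm_mul_euler] at hx₁
  have hz₁ := lagr_one_lagr_z f
  rw [hz, hone, lagr_smul_right, lagr_one_euler_sq, lagr_z_linForm_mul_euler] at hz₁
  have ha : a = 0 := by
    refine (mul_eq_zero_iff_left (by norm_num : (6 : ℝ) ≠ 0)).mp
      (eq_zero_of_quadForm_add_eq_zero (q := ![-2 * b, 2 * a, 0]) ?_)
    rw [quadForm_apply]
    linear_combination (norm := (simp only [linForm, Matrix.cons_val]; algebra)) hx₁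
  have hb : b = 0 := by
    refine (mul_eq_zero_iff_left (by norm_num : (6 : ℝ) ≠ 0)).mp
      (eq_zero_of_quadForm_add_eq_zero (q := ![0, -2 * b, 2 * a]) ?_)
    rw [quadForm_apply]
    linear_combination (norm := (simp only [linForm, Matrix.cons_val]; algebra)) hz₁
  refine eq_zero_of_lagr_x_of_lagr_z (by decide) hf ?_ ?_
  · rw [hx, ha, zero_smul]
  · rw [hz, hb, zero_smul]

lemma sq_mem_and_mul_mem {h : Submodule ℝ PL} (hquad : ∀ q, quadForm q ∈ h) :
    X 0 ^ 2 ∈ h ∧ X 0 * X 2 ∈ h ∧ X 2 ^ 2 ∈ h := by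
  refine ⟨?_, ?_, ?_⟩
  · simpa [quadForm_apply] using hquad ![1, 0, 0]
  · simpa [quadForm_apply] using hquad ![0, 1, 0]
  · simpa [quadForm_apply] using hquad ![0, 0, 1]

lemma grade_zero_le_span {h : Submodule ℝ PL} (hquad : ∀ q, quadForm q ∈ h) {S : Set PL}
    (hxx : X 0 ^ 2 ∈ S) (hxz : X 0 * X 2 ∈ S) (hzz : X 2 ^ 2 ∈ S)
    (hU : euler ∈ h → euler ∈ Submodule.span ℝ S) : h ⊓ Lgrade 0 ≤ Submodule.span ℝ S := by
  rintro f ⟨hf, hf0⟩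
  obtain ⟨q, d, rfl⟩ := exists_eq_quadForm_add hf0
  have mem {g : PL} (hg : g ∈ S) (a : ℝ) : a • g ∈ Submodule.span ℝ S :=
    Submodule.smul_mem _ a (Submodule.subset_span hg)
  refine add_mem ?_ ?_
  · rw [quadForm_apply]
    exact add_mem (add_mem (mem hxx _) (mem hxz _)) (mem hzz _)
  · rcases eq_or_ne d 0 with rfl | hd
    · rw [zero_smul]
      exact zero_mem _
    · exact Submodule.smul_mem _ d
        (hU ((h.smul_mem_iff hd).mp ((h.add_mem_iff_right (hquad q)).mp hf)))

lemma euler_mem_span {S : Set PL} (hy : X 1 ∈ S) (hxz : X 0 * X 2 ∈ S) :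
    euler ∈ Submodule.span ℝ S := by
  rw [euler, two_mul]
  exact sub_mem (add_mem (Submodule.subset_span hy) (Submodule.subset_span hy))
    (Submodule.subset_span hxz)

lemma y_mem_of_euler_mem {h : Submodule ℝ PL} (hxz : X 0 * X 2 ∈ h) (hU : euler ∈ h) :
    X 1 ∈ h := by
  have : (X 1 : PL) = (1 / 2 : ℝ) • (euler + X 0 * X 2) := by algebra
  exact this ▸ h.smul_mem _ (h.add_mem hU hxz)

namespace IsContact

variable {h : Submodule ℝ PL} (hh : IsContact h) (hquad : ∀ q, quadForm q ∈ h)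

include hh hquad

lemma x_sq_mul_z_notMem (hfd : FiniteDimensional ℝ h) : X 0 ^ 2 * X 2 ∉ h := by
  intro hmem
  refine not_finiteDimensional_of_X_pow_mem (k := 2) 0 (fun n hn => ?_) hfd
  induction n, hn using Nat.le_induction with
  | base => exact (sq_mem_and_mul_mem hquad).1
  | succ n hn ih =>
    have hlagr := hh.lagr_mem _ hmem _ ih
    rw [lagr_x_sq_mul_z_x_pow] at hlagr
    exact (h.smul_mem_iff (neg_ne_zero.mpr (Nat.cast_ne_zero.mpr (by omega)))).mp hlagr

lemma eq_zero_of_smul_x_cube_add_mem (hfd : FiniteDimensional ℝ h) {a b : ℝ}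
    (hmem : a • X 0 ^ 3 + b • (X 0 ^ 2 * X 2) ∈ h) : a = 0 ∧ b = 0 := by
  obtain ⟨hxx, -, hzz⟩ := sq_mem_and_mul_mem hquad
  have x_cube_notMem : X 0 ^ 3 ∉ h := fun hx3 => hh.x_sq_mul_z_notMem hquad hfd <|
    (h.smul_mem_iff (by norm_num)).mp (lagr_z_sq_x_cube ▸ hh.lagr_mem _ hzz _ hx3)
  have eq_zero_of_smul_mem {r : ℝ} (hr : r • X 0 ^ 3 ∈ h) : r = 0 := by
    by_contra hr0
    exact x_cube_notMem ((h.smul_mem_iff hr0).mp hr)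
  have hb : b = 0 := by
    have := eq_zero_of_smul_mem (lagr_x_sq_smul_x_cube_add a b ▸ hh.lagr_mem _ hxx _ hmem)
    linarith
  rw [hb, zero_smul, add_zero] at hmem
  exact ⟨eq_zero_of_smul_mem hmem, hb⟩

lemma exists_eq_linForm_mul_euler (hfd : FiniteDimensional ℝ h) (hf : f ∈ h ⊓ Lgrade 1) :
    ∃ a b, f = linForm a b * euler := by
  obtain ⟨hxx, -, hzz⟩ := sq_mem_and_mul_mem hquad
  obtain ⟨c, a, b, rfl⟩ := exists_eq_cubicForm_add hf.2
  have sq_mem {k : PL} (hk : k ∈ h) {g : PL} (hg : g ∈ h) : lagr k (lagr k g) ∈ h :=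
    hh.lagr_mem _ hk _ (hh.lagr_mem _ hk _ hg)
  obtain ⟨h2, h3⟩ := hh.eq_zero_of_smul_x_cube_add_mem hquad hfd
    (lagr_x_sq_sq_cubicForm_add c a b ▸ sq_mem hxx hf.1)
  obtain ⟨h0, h1⟩ := hh.eq_zero_of_smul_x_cube_add_mem hquad hfd
    (lagr_x_sq_sq_z_sq_sq_cubicForm_add c a b ▸ sq_mem hxx (sq_mem hzz hf.1))
  have hc : c = 0 := funext fun
    | 0 => by simpa using h0
    | 1 => by simpa using h1
    | 2 => by simpa using h2
    | 3 => by simpa using h3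
  exact ⟨a, b, by simp [hc, cubicForm]⟩

lemma exists_eq_smul_euler_sq (hfd : FiniteDimensional ℝ h) (hf : f ∈ h ⊓ Lgrade 2) :
    ∃ a : ℝ, f = a • euler ^ 2 := by
  obtain ⟨a, b, hx⟩ := hh.exists_eq_linForm_mul_euler hquad hfd (hh.lagr_x_mem hf)
  obtain ⟨a', b', hz⟩ := hh.exists_eq_linForm_mul_euler hquad hfd (hh.lagr_z_mem hf)
  exact ⟨_, eq_smul_euler_sq hf.2 hx hz⟩

lemma grade_three_eq_bot_of_quadForm_mem (hfd : FiniteDimensional ℝ h) : h ⊓ Lgrade 3 = ⊥ := by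
  refine (Submodule.eq_bot_iff _).mpr fun f hf => ?_
  obtain ⟨a, hx⟩ := hh.exists_eq_smul_euler_sq hquad hfd (hh.lagr_x_mem hf)
  obtain ⟨b, hz⟩ := hh.exists_eq_smul_euler_sq hquad hfd (hh.lagr_z_mem hf)
  exact eq_zero_of_lagr_eq_smul_euler_sq hf.2 hx hz

lemma linForm_mul_euler_mem_of_grade_one_ne_bot (hfd : FiniteDimensional ℝ h)
    (h₁ : h ⊓ Lgrade 1 ≠ ⊥) : X 0 * euler ∈ h ∧ X 2 * euler ∈ h := by
  obtain ⟨hxx, -, hzz⟩ := sq_mem_and_mul_mem hquad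
  have hx (a b : ℝ) (hmem : linForm a b * euler ∈ h) : b • (X 0 * euler) ∈ h := by
    refine (h.smul_mem_iff two_ne_zero).mp (?_ : (2 : ℝ) • b • (X 0 * euler) ∈ h)
    rw [smul_smul, ← lagr_x_sq_linForm_mul_euler a b]
    exact hh.lagr_mem _ hxx _ hmem
  have hz (a b : ℝ) (hmem : linForm a b * euler ∈ h) : a • (X 2 * euler) ∈ h := by
    refine (h.smul_mem_iff (neg_ne_zero.mpr two_ne_zero)).mp
      (?_ : (-2 : ℝ) • a • (X 2 * euler) ∈ h)
    rw [smul_smul, ← lagr_z_sq_linForm_mul_euler a b]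
    exact hh.lagr_mem _ hzz _ hmem
  obtain ⟨f, hf, hf0⟩ := Submodule.exists_mem_ne_zero_of_ne_bot h₁
  obtain ⟨a, b, rfl⟩ := hh.exists_eq_linForm_mul_euler hquad hfd hf
  rcases eq_or_ne a 0 with rfl | ha
  · have hb : b ≠ 0 := by rintro rfl; simp [linForm] at hf0
    have hxU := (h.smul_mem_iff hb).mp (hx 0 b hf.1)
    exact ⟨hxU, by simpa using hz 1 0 (by simpa [linForm] using hxU)⟩
  · have hzU := (h.smul_mem_iff ha).mp (hz a b hf.1)
    exact ⟨by simpa using hx 0 1 (by simpa [linForm] using hzU), hzU⟩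

lemma eq_Tgt_zero_of_grade_one_ne_bot (hfd : FiniteDimensional ℝ h) (h₁ : h ⊓ Lgrade 1 ≠ ⊥) :
    h = Tgt (Sum.inl 0) := by
  obtain ⟨hxx, hxz, hzz⟩ := sq_mem_and_mul_mem hquad
  obtain ⟨hxU, hzU⟩ := hh.linForm_mul_euler_mem_of_grade_one_ne_bot hquad hfd h₁
  have hU : euler ∈ h := by
    have : euler = X 0 * X 2 - lagr (X 2) (X 0 * euler) := by
      rw [lagr_z_mul, lagr_z_euler, lagr_skew, lagr_x_z]
      ring
    exact this ▸ h.sub_mem hxz (hh.lagr_mem _ hh.z_mem _ hxU)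
  refine hh.eq_span_of_grade_le ?_ (by simp) (by simp) (by simp)
    (grade_zero_le_span hquad (by simp) (by simp) (by simp) fun _ =>
      euler_mem_span (by simp) (by simp)) ?_ ?_
    (hh.grade_three_eq_bot_of_quadForm_mem hquad hfd)
  · simp only [Set.insert_subset_iff, Set.singleton_subset_iff, SetLike.mem_coe]
    exact ⟨hh.one_mem, hh.x_mem, y_mem_of_euler_mem hxz hU, hh.z_mem, hxx, hxz, hzz, hxU, hzU,
      lagr_x_mul_euler_z_mul_euler ▸ hh.lagr_mem _ hxU _ hzU⟩
  · intro f hf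
    obtain ⟨a, b, rfl⟩ := hh.exists_eq_linForm_mul_euler hquad hfd hf
    rw [add_mul, smul_mul_assoc, smul_mul_assoc]
    exact add_mem (Submodule.smul_mem _ _ (Submodule.subset_span (by simp)))
      (Submodule.smul_mem _ _ (Submodule.subset_span (by simp)))
  · intro f hf
    obtain ⟨a, rfl⟩ := hh.exists_eq_smul_euler_sq hquad hfd hf
    exact Submodule.smul_mem _ _ (Submodule.subset_span (by simp))

lemma exists_eq_Tgt_of_quadForm_mem (hfd : FiniteDimensional ℝ h) :
    ∃ i : Fin 5, h = Tgt (Sum.inl i) := by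
  obtain ⟨hxx, hxz, hzz⟩ := sq_mem_and_mul_mem hquad
  by_cases h₁ : h ⊓ Lgrade 1 = ⊥
  · by_cases hU : euler ∈ h
    · refine ⟨1, hh.eq_span_of_grade_one_eq_bot ?_ (by simp) (by simp) (by simp)
        (grade_zero_le_span hquad (by simp) (by simp) (by simp) fun _ =>
          euler_mem_span (by simp) (by simp)) h₁⟩
      simp only [Set.insert_subset_iff, Set.singleton_subset_iff, SetLike.mem_coe]
      exact ⟨hh.one_mem, hh.x_mem, y_mem_of_euler_mem hxz hU, hh.z_mem, hxx, hxz, hzz⟩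
    · refine ⟨2, hh.eq_span_of_grade_one_eq_bot ?_ (by simp) (by simp) (by simp)
        (grade_zero_le_span hquad (by simp) (by simp) (by simp) fun hU' => absurd hU' hU) h₁⟩
      simp only [Set.insert_subset_iff, Set.singleton_subset_iff, SetLike.mem_coe]
      exact ⟨hh.one_mem, hh.x_mem, hh.z_mem, hxx, hxz, hzz⟩
  · exact ⟨0, hh.eq_Tgt_zero_of_grade_one_ne_bot hquad hfd h₁⟩

end IsContact

/-! ### The case of a definite quadratic form -/

/-- The definite quadratic form `x² + z² ∈ L₀`. -/
def sumSq : PL := X 0 ^ 2 + X 2 ^ 2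

/-- The element of `L₁` which `x` maps to `-2 (2y - xz)` and `z` to `-3 (x² + z²)`. -/
def cubicX : PL := X 0 * sumSq - 2 * X 2 * euler

/-- The element of `L₁` which `x` maps to `3 (x² + z²)` and `z` to `-2 (2y - xz)`. -/
def cubicZ : PL := X 2 * sumSq + 2 * X 0 * euler

/-- The top degree element `{cubicX, cubicZ}` of the algebra `4°`. -/
def quartic : PL := sumSq ^ 2 + 4 * euler ^ 2

lemma quadForm_one_zero_one : quadForm ![1, 0, 1] = sumSq := by
  simp only [quadForm_apply, sumSq, Matrix.cons_val]
  algebra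

lemma lagr_x_sumSq : lagr (X 0) sumSq = linForm 0 2 := by
  simp only [linForm, lagr_x, sumSq, map_add, sq, pderiv_mul, pderiv_X_self, pderiv_X_of_ne, ne_eq,
    Fin.isValue, Fin.reduceEq, not_false_eq_true]
  algebra

lemma lagr_z_sumSq : lagr (X 2) sumSq = linForm (-2) 0 := by
  simp only [linForm, lagr_z, sumSq, map_add, sq, pderiv_mul, pderiv_X_self, pderiv_X_of_ne, ne_eq,
    Fin.isValue, Fin.reduceEq, not_false_eq_true]
  algebra

lemma lagr_x_cubicX : lagr (X 0) cubicX = (-2 : ℝ) • euler := by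
  simp only [lagr_x, cubicX, sumSq, map_add, map_sub, sq, pderiv_mul, pderiv_ofNat,
    pderiv_X_self, pderiv_X_of_ne, ne_eq, Fin.isValue, Fin.reduceEq, not_false_eq_true]
  algebra

lemma lagr_z_cubicX : lagr (X 2) cubicX = (-3 : ℝ) • sumSq := by
  simp only [lagr_z, cubicX, sumSq, map_add, map_sub, sq, pderiv_mul, pderiv_ofNat,
    pderiv_X_self, pderiv_X_of_ne, ne_eq, Fin.isValue, Fin.reduceEq, not_false_eq_true]
  algebra

lemma lagr_x_cubicZ : lagr (X 0) cubicZ = (3 : ℝ) • sumSq := by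
  simp only [lagr_x, cubicZ, sumSq, map_add, map_sub, sq, pderiv_mul, pderiv_ofNat,
    pderiv_X_self, pderiv_X_of_ne, ne_eq, Fin.isValue, Fin.reduceEq, not_false_eq_true]
  algebra

lemma lagr_z_cubicZ : lagr (X 2) cubicZ = (-2 : ℝ) • euler := by
  simp only [lagr_z, cubicZ, sumSq, map_add, map_sub, sq, pderiv_mul, pderiv_ofNat,
    pderiv_X_self, pderiv_X_of_ne, ne_eq, Fin.isValue, Fin.reduceEq, not_false_eq_true]
  algebra

lemma lagr_one_cubicX : lagr 1 cubicX = linForm 0 (-4) := by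
  simp only [linForm, lagr_one, cubicX, sumSq, map_add, map_sub, sq, pderiv_mul, pderiv_ofNat,
    pderiv_X_self, pderiv_X_of_ne, ne_eq, Fin.isValue, Fin.reduceEq, not_false_eq_true]
  algebra

lemma lagr_one_cubicZ : lagr 1 cubicZ = linForm 4 0 := by
  simp only [linForm, lagr_one, cubicZ, sumSq, map_add, map_sub, sq, pderiv_mul, pderiv_ofNat,
    pderiv_X_self, pderiv_X_of_ne, ne_eq, Fin.isValue, Fin.reduceEq, not_false_eq_true]
  algebra

lemma lagr_x_quartic : lagr (X 0) quartic = (4 : ℝ) • cubicZ := by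
  simp only [lagr_x, cubicZ, quartic, sumSq, map_add, map_sub, sq, pderiv_mul, pderiv_ofNat,
    pderiv_X_self, pderiv_X_of_ne, ne_eq, Fin.isValue, Fin.reduceEq, not_false_eq_true]
  algebra

lemma lagr_z_quartic : lagr (X 2) quartic = (-4 : ℝ) • cubicX := by
  simp only [lagr_z, cubicX, quartic, sumSq, map_add, map_sub, sq, pderiv_mul, pderiv_ofNat,
    pderiv_X_self, pderiv_X_of_ne, ne_eq, Fin.isValue, Fin.reduceEq, not_false_eq_true]
  algebra

lemma lagr_one_quartic : lagr 1 quartic = (16 : ℝ) • euler := by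
  simp only [lagr_one, quartic, sumSq, map_add, map_sub, sq, pderiv_mul, pderiv_ofNat,
    pderiv_X_self, pderiv_X_of_ne, ne_eq, Fin.isValue, Fin.reduceEq, not_false_eq_true]
  algebra

lemma lagr_sumSq_cubicX : lagr sumSq cubicX = (-2 : ℝ) • cubicZ := by
  simp only [lagr, cubicX, cubicZ, sumSq, map_add, map_sub, sq, pderiv_mul, pderiv_ofNat,
    pderiv_X_self, pderiv_X_of_ne, ne_eq, Fin.isValue, Fin.reduceEq, not_false_eq_true]
  algebra

lemma lagr_sumSq_cubicZ : lagr sumSq cubicZ = (2 : ℝ) • cubicX := by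
  simp only [lagr, cubicX, cubicZ, sumSq, map_add, map_sub, sq, pderiv_mul, pderiv_ofNat,
    pderiv_X_self, pderiv_X_of_ne, ne_eq, Fin.isValue, Fin.reduceEq, not_false_eq_true]
  algebra

lemma lagr_cubicX_cubicZ : lagr cubicX cubicZ = quartic := by
  simp only [lagr, cubicX, cubicZ, quartic, sumSq, map_add, map_sub, sq, pderiv_mul, pderiv_ofNat,
    pderiv_X_self, pderiv_X_of_ne, ne_eq, Fin.isValue, Fin.reduceEq, not_false_eq_true]
  algebra

lemma eq_of_lagr_eq_smul_sumSq_add {s₁ s₂ t₁ t₂ : ℝ} (hf : f ∈ Lgrade 1)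
    (hx : lagr (X 0) f = s₁ • sumSq + s₂ • euler) (hz : lagr (X 2) f = t₁ • sumSq + t₂ • euler) :
    f = (-t₁ / 3) • cubicX + (s₁ / 3) • cubicZ := by
  have hrec := smul_eq_of_mem_Lgrade hf
  rw [lagr_one_eq_sub, hx, hz] at hrec
  simp only [lagr_add_right, lagr_smul_right, lagr_x_sumSq, lagr_x_euler, lagr_z_sumSq,
    lagr_z_euler] at hrec
  push_cast at hrec
  simp only [cubicX, cubicZ]
  linear_combination (norm := algebra) (1 / 3 : ℝ) • hrec

lemma eq_smul_quartic_of_lagr_eq_smul {a₁ b₁ a₂ b₂ : ℝ} (hf : f ∈ Lgrade 2)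
    (hx : lagr (X 0) f = a₁ • cubicX + b₁ • cubicZ)
    (hz : lagr (X 2) f = a₂ • cubicX + b₂ • cubicZ) : ∃ a : ℝ, f = a • quartic := by
  have hone : lagr 1 f = (3 * (a₁ + b₂)) • sumSq + (2 * b₁ - 2 * a₂) • euler := by
    rw [lagr_one_eq_sub, hx, hz]
    simp only [lagr_add_right, lagr_smul_right, lagr_x_cubicX, lagr_x_cubicZ, lagr_z_cubicX,
      lagr_z_cubicZ]
    algebra
  have hx₁ := lagr_one_lagr_x f
  have hz₁ := lagr_one_lagr_z f
  rw [hx, hone] at hx₁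
  rw [hz, hone] at hz₁
  simp only [lagr_add_right, lagr_smul_right, lagr_one_cubicX, lagr_one_cubicZ, lagr_x_sumSq,
    lagr_x_euler, lagr_z_sumSq, lagr_z_euler] at hx₁ hz₁
  obtain ⟨h1, h2⟩ : 2 * b₁ + 2 * a₂ = 0 ∧ -10 * a₁ - 6 * b₂ = 0 := by
    refine linForm_eq_zero.mp ?_
    linear_combination (norm := algebra) hx₁
  obtain ⟨h3, -⟩ : 10 * b₂ + 6 * a₁ = 0 ∧ -2 * b₁ - 2 * a₂ = 0 := by
    refine linForm_eq_zero.mp ?_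
    linear_combination (norm := algebra) hz₁
  obtain ⟨rfl, rfl, rfl⟩ : a₁ = 0 ∧ b₂ = 0 ∧ a₂ = -b₁ := ⟨by linarith, by linarith, by linarith⟩
  have hrec := smul_eq_of_mem_Lgrade hf
  rw [hone, hx, hz] at hrec
  push_cast at hrec
  refine ⟨b₁ / 4, ?_⟩
  simp only [quartic, cubicX, cubicZ, sumSq] at hrec ⊢
  linear_combination (norm := algebra) (1 / 4 : ℝ) • hrec

lemma eq_zero_of_lagr_eq_smul_quartic {a b : ℝ} (hf : f ∈ Lgrade 3)
    (hx : lagr (X 0) f = a • quartic) (hz : lagr (X 2) f = b • quartic) : f = 0 := by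
  have hone : lagr 1 f = (4 * a) • cubicX + (4 * b) • cubicZ := by
    rw [lagr_one_eq_sub, hx, hz, lagr_smul_right, lagr_smul_right, lagr_x_quartic, lagr_z_quartic]
    algebra
  have hx₁ := lagr_one_lagr_x f
  have hz₁ := lagr_one_lagr_z f
  rw [hx, hone, lagr_smul_right, lagr_one_quartic, lagr_add_right, lagr_smul_right,
    lagr_smul_right, lagr_x_cubicX, lagr_x_cubicZ] at hx₁
  rw [hz, hone, lagr_smul_right, lagr_one_quartic, lagr_add_right, lagr_smul_right,
    lagr_smul_right, lagr_z_cubicX, lagr_z_cubicZ] at hz₁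
  have ha : 24 * a = 0 := by
    refine eq_zero_of_quadForm_add_eq_zero (q := (-12 * b) • ![1, 0, 1]) ?_
    rw [map_smul, quadForm_one_zero_one]
    linear_combination (norm := algebra) hx₁
  have hb : 24 * b = 0 := by
    refine eq_zero_of_quadForm_add_eq_zero (q := (12 * a) • ![1, 0, 1]) ?_
    rw [map_smul, quadForm_one_zero_one]
    linear_combination (norm := algebra) hz₁
  refine eq_zero_of_lagr_x_of_lagr_z (by decide) hf ?_ ?_
  · rw [hx, (mul_eq_zero_iff_left (by norm_num)).mp ha, zero_smul]
  · rw [hz, (mul_eq_zero_iff_left (by norm_num)).mp hb, zero_smul]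

namespace IsContact

variable {h : Submodule ℝ PL} (hh : IsContact h)
  (hell : ∀ f ∈ h ⊓ Lgrade 0, ∃ a b : ℝ, f = a • sumSq + b • euler)

include hh hell

lemma exists_eq_smul_cubicX_add (hf : f ∈ h ⊓ Lgrade 1) :
    ∃ a b : ℝ, f = a • cubicX + b • cubicZ := by
  obtain ⟨s₁, s₂, hx⟩ := hell _ (hh.lagr_x_mem hf)
  obtain ⟨t₁, t₂, hz⟩ := hell _ (hh.lagr_z_mem hf)
  exact ⟨_, _, eq_of_lagr_eq_smul_sumSq_add hf.2 hx hz⟩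

lemma exists_eq_smul_quartic (hf : f ∈ h ⊓ Lgrade 2) : ∃ a : ℝ, f = a • quartic := by
  obtain ⟨a₁, b₁, hx⟩ := hh.exists_eq_smul_cubicX_add hell (hh.lagr_x_mem hf)
  obtain ⟨a₂, b₂, hz⟩ := hh.exists_eq_smul_cubicX_add hell (hh.lagr_z_mem hf)
  exact eq_smul_quartic_of_lagr_eq_smul hf.2 hx hz

lemma grade_three_eq_bot_of_elliptic : h ⊓ Lgrade 3 = ⊥ := by
  refine (Submodule.eq_bot_iff _).mpr fun f hf => ?_
  obtain ⟨a, hx⟩ := hh.exists_eq_smul_quartic hell (hh.lagr_x_mem hf)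
  obtain ⟨b, hz⟩ := hh.exists_eq_smul_quartic hell (hh.lagr_z_mem hf)
  exact eq_zero_of_lagr_eq_smul_quartic hf.2 hx hz

lemma cubic_mem_of_grade_one_ne_bot (hQ : sumSq ∈ h) (h₁ : h ⊓ Lgrade 1 ≠ ⊥) :
    cubicX ∈ h ∧ cubicZ ∈ h := by
  obtain ⟨f, hf, hf0⟩ := Submodule.exists_mem_ne_zero_of_ne_bot h₁
  obtain ⟨a, b, rfl⟩ := hh.exists_eq_smul_cubicX_add hell hf
  have hrot := hh.lagr_mem _ hQ _ hf.1
  rw [lagr_add_right, lagr_smul_right, lagr_smul_right, lagr_sumSq_cubicX, lagr_sumSq_cubicZ]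
    at hrot
  have hN : a ^ 2 + b ^ 2 ≠ 0 := fun hN => hf0 <| by
    obtain ⟨rfl, rfl⟩ : a = 0 ∧ b = 0 := ⟨by nlinarith, by nlinarith⟩
    rw [zero_smul, zero_smul, add_zero]
  constructor
  · refine (h.smul_mem_iff hN).mp ?_
    convert h.add_mem (h.smul_mem a hf.1) (h.smul_mem (b / 2) hrot) using 1
    algebra
  · refine (h.smul_mem_iff hN).mp ?_
    convert h.sub_mem (h.smul_mem b hf.1) (h.smul_mem (a / 2) hrot) using 1
    algebra

lemma eq_Tgt_three (hQ : sumSq ∈ h) (hU : euler ∈ h) (h₁ : h ⊓ Lgrade 1 ≠ ⊥) :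
    h = Tgt (Sum.inl 3) := by
  obtain ⟨hX, hZ⟩ := hh.cubic_mem_of_grade_one_ne_bot hell hQ h₁
  have hR : quartic ∈ h := lagr_cubicX_cubicZ ▸ hh.lagr_mem _ hX _ hZ
  refine hh.eq_span_of_grade_le ?_ (by simp) (by simp) (by simp) ?_ ?_ ?_
    (hh.grade_three_eq_bot_of_elliptic hell)
  · simp only [Set.insert_subset_iff, Set.singleton_subset_iff, SetLike.mem_coe]
    exact ⟨hh.one_mem, hh.x_mem, hh.z_mem, hQ, hU, hX, hZ, hR⟩
  · intro f hf
    obtain ⟨a, b, rfl⟩ := hell f hf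
    exact add_mem (Submodule.smul_mem _ _ (Submodule.subset_span (by simp [sumSq])))
      (Submodule.smul_mem _ _ (Submodule.subset_span (by simp)))
  · intro f hf
    obtain ⟨a, b, rfl⟩ := hh.exists_eq_smul_cubicX_add hell hf
    exact add_mem (Submodule.smul_mem _ _ (Submodule.subset_span (by simp [cubicX, sumSq])))
      (Submodule.smul_mem _ _ (Submodule.subset_span (by simp [cubicZ, sumSq])))
  · intro f hf
    obtain ⟨a, rfl⟩ := hh.exists_eq_smul_quartic hell hf
    exact Submodule.smul_mem _ _ (Submodule.subset_span (by simp [quartic, sumSq]))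

lemma eq_Tgt_four (hQ : sumSq ∈ h) (hU : euler ∈ h) (h₁ : h ⊓ Lgrade 1 = ⊥) :
    h = Tgt (Sum.inl 4) := by
  refine hh.eq_span_of_grade_one_eq_bot ?_ (by simp) (by simp) (by simp) ?_ h₁
  · simp only [Set.insert_subset_iff, Set.singleton_subset_iff, SetLike.mem_coe]
    exact ⟨hh.one_mem, hh.x_mem, hh.z_mem, hQ, hU⟩
  · intro f hf
    obtain ⟨a, b, rfl⟩ := hell f hf
    exact add_mem (Submodule.smul_mem _ _ (Submodule.subset_span (by simp [sumSq])))
      (Submodule.smul_mem _ _ (Submodule.subset_span (by simp)))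

omit hh in
lemma exists_eq_smul_of_euler_notMem {α : ℝ} (hE : sumSq + α • euler ∈ h) (hU : euler ∉ h)
    (hf : f ∈ h ⊓ Lgrade 0) : ∃ s : ℝ, f = s • (sumSq + α • euler) := by
  obtain ⟨a, b, rfl⟩ := hell f hf
  have hdiff : (b - a * α) • euler ∈ h := by
    convert h.sub_mem hf.1 (h.smul_mem a hE) using 1
    algebra
  have hb : b = a * α := by
    by_contra hne
    exact hU ((h.smul_mem_iff (sub_ne_zero.mpr hne)).mp hdiff)
  exact ⟨a, by rw [hb, smul_add, smul_smul]⟩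

lemma grade_one_eq_bot_of_euler_notMem {α : ℝ} (hE : sumSq + α • euler ∈ h) (hU : euler ∉ h) :
    h ⊓ Lgrade 1 = ⊥ := by
  refine (Submodule.eq_bot_iff _).mpr fun f hf => ?_
  have hx₀ := hh.lagr_x_mem (p := 0) hf
  have hz₀ := hh.lagr_z_mem (p := 0) hf
  obtain ⟨s, hs⟩ := exists_eq_smul_of_euler_notMem hell hE hU hx₀
  obtain ⟨t, ht⟩ := exists_eq_smul_of_euler_notMem hell hE hU hz₀
  have hx : lagr (X 0) f = s • sumSq + (s * α) • euler := by rw [hs, smul_add, smul_smul]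
  have hz : lagr (X 2) f = t • sumSq + (t * α) • euler := by rw [ht, smul_add, smul_smul]
  have hf' := eq_of_lagr_eq_smul_sumSq_add hf.2 hx hz
  rw [hf', lagr_add_right, lagr_smul_right, lagr_smul_right, lagr_x_cubicX, lagr_x_cubicZ] at hx
  rw [hf', lagr_add_right, lagr_smul_right, lagr_smul_right, lagr_z_cubicX, lagr_z_cubicZ] at hz
  have hst : 2 * t / 3 - s * α = 0 := by
    refine eq_zero_of_quadForm_add_eq_zero (q := 0) ?_
    rw [map_zero]
    linear_combination (norm := algebra) hx
  have hts : -(2 * s / 3) - t * α = 0 := by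
    refine eq_zero_of_quadForm_add_eq_zero (q := 0) ?_
    rw [map_zero]
    linear_combination (norm := algebra) hz
  have hsq : s ^ 2 + t ^ 2 = 0 := by linear_combination 3 / 2 * t * hst - 3 / 2 * s * hts
  obtain ⟨rfl, rfl⟩ : s = 0 ∧ t = 0 := ⟨by nlinarith, by nlinarith⟩
  rw [hf', neg_zero, zero_div, zero_smul, zero_smul, add_zero]

lemma eq_Tgt_inr {α : ℝ} (hE : sumSq + α • euler ∈ h) (hU : euler ∉ h) :
    h = Tgt (Sum.inr α) := by
  have hEmem : sumSq + α • euler = X 0 ^ 2 + X 2 ^ 2 + C α * (2 * X 1 - X 0 * X 2) := by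
    rw [sumSq, smul_eq_C_mul]
  refine hh.eq_span_of_grade_one_eq_bot ?_ (by simp) (by simp) (by simp) ?_
    (hh.grade_one_eq_bot_of_euler_notMem hell hE hU)
  · simp only [Set.insert_subset_iff, Set.singleton_subset_iff, SetLike.mem_coe]
    exact ⟨hh.one_mem, hh.x_mem, hh.z_mem, hEmem ▸ hE⟩
  · intro f hf
    obtain ⟨s, rfl⟩ := exists_eq_smul_of_euler_notMem hell hE hU hf
    exact Submodule.smul_mem _ _ (Submodule.subset_span (by simp [hEmem]))

lemma exists_eq_Tgt_of_elliptic {α : ℝ} (hα : 0 ≤ α) (hE : sumSq + α • euler ∈ h) :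
    ∃ i, (∀ β, i = Sum.inr β → 0 ≤ β) ∧ h = Tgt i := by
  by_cases hU : euler ∈ h
  · have hQ : sumSq ∈ h := (h.add_mem_iff_left (h.smul_mem α hU)).mp hE
    by_cases h₁ : h ⊓ Lgrade 1 = ⊥
    · exact ⟨Sum.inl 4, nofun, hh.eq_Tgt_four hell hQ hU h₁⟩
    · exact ⟨Sum.inl 3, nofun, hh.eq_Tgt_three hell hQ hU h₁⟩
  · exact ⟨Sum.inr α, by rintro _ ⟨⟩; exact hα, hh.eq_Tgt_inr hell hE hU⟩

omit hell in
lemma exists_map_eq_Tgt_of_definite {c : Fin 3 → ℝ} (hc : c ∈ quadParts h)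
    (hdisc : 4 * c 0 * c 2 - c 1 ^ 2 = 4) (hspan : quadParts h ≤ Submodule.span ℝ {c}) :
    ∃ i F, (∀ α, i = Sum.inr α → 0 ≤ α) ∧ IsGradedEmbedding F ∧ h.map F = Tgt i := by
  wlog hpos : ∃ α ≥ 0, quadForm c + α • euler ∈ h generalizing c
  · obtain ⟨d, hd⟩ := mem_quadParts.mp hc
    refine this (c := -c) (neg_mem hc) ?_ ?_ ⟨-d, ?_, ?_⟩
    · simpa using hdisc
    · rwa [← Set.neg_singleton, Submodule.span_neg]
    · by_contra! hneg
      exact hpos ⟨d, by linarith, hd⟩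
    · rw [map_neg, neg_smul, ← neg_add]
      exact neg_mem hd
  obtain ⟨α, hα, hE⟩ := hpos
  have hc0 : c 0 ≠ 0 := fun h0 => by rw [h0] at hdisc; nlinarith [sq_nonneg (c 1)]
  set F := contactAut (-c 1 / 4) (c 0)
  have hF : IsGradedEmbedding F := isGradedEmbedding_contactAut _ hc0
  have hFc : F (quadForm c) = sumSq := contactAut_quadForm hdisc
  have hell : ∀ f ∈ h.map F ⊓ Lgrade 0, ∃ a b : ℝ, f = a • sumSq + b • euler := by
    rw [← hF.map_inf_Lgrade]
    rintro _ ⟨f, hf, rfl⟩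
    obtain ⟨q, d, rfl⟩ := exists_eq_quadForm_add hf.2
    obtain ⟨a, rfl⟩ := Submodule.mem_span_singleton.mp (hspan (mem_quadParts.mpr ⟨d, hf.1⟩))
    exact ⟨a, d, by rw [map_add, map_smul, map_smul, map_smul, hFc, hF.map_euler]⟩
  have hE' : sumSq + α • euler ∈ h.map F :=
    ⟨_, hE, by rw [map_add, map_smul, hFc, hF.map_euler]⟩
  obtain ⟨i, hi, hmap⟩ := (hh.map_contactAut _ hc0).exists_eq_Tgt_of_elliptic hell hα hE'
  exact ⟨i, F, hi, hF, hmap⟩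

end IsContact

/-! ### Uniqueness -/

lemma finrank_Tgt_zero : Module.finrank ℝ (Tgt (Sum.inl 0)) = 10 := by
  refine finrank_eq_of_forall_eval (v := ![1, X 0, X 1, X 2, X 0 ^ 2, X 0 * X 2, X 2 ^ 2,
    X 0 * euler, X 2 * euler, euler ^ 2]) ?_ fun a ha i => ?_
  · simp only [Matrix.range_cons, Matrix.range_empty, Set.union_empty, Set.singleton_union]
    rfl
  · replace ha := fun x y z => ha ![x, y, z]
    simp only [Fin.sum_univ_castSucc (n := 9), Fin.sum_univ_castSucc (n := 8), Fin.sum_univ_eight,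
      Fin.reduceCastSucc, Fin.reduceLast, Matrix.cons_val, map_one, map_sub, map_mul, map_pow,
      map_ofNat, eval_X] at ha
    fin_cases i <;> simp only [Fin.mk_zero, Fin.mk_one, Fin.reduceFinMk] <;>
      linarith [ha 0 0 0, ha 1 0 0, ha (-1) 0 0, ha 0 0 1, ha 0 0 (-1), ha 0 1 0, ha 0 (-1) 0,
      ha 1 1 0, ha 0 1 1, ha 1 0 1]

lemma finrank_Tgt_one : Module.finrank ℝ (Tgt (Sum.inl 1)) = 7 := by
  refine finrank_eq_of_forall_eval (v := ![1, X 0, X 1, X 2, X 0 ^ 2, X 0 * X 2,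
      X 2 ^ 2]) ?_ fun a ha i => ?_
  · simp only [Matrix.range_cons, Matrix.range_empty, Set.union_empty, Set.singleton_union]
    rfl
  · replace ha := fun x y z => ha ![x, y, z]
    simp only [Fin.sum_univ_seven, Matrix.cons_val, map_one, map_mul, map_pow, eval_X] at ha
    fin_cases i <;> simp only [Fin.mk_zero, Fin.mk_one, Fin.reduceFinMk] <;>
      linarith [ha 0 0 0, ha 1 0 0, ha (-1) 0 0, ha 0 0 1, ha 0 0 (-1), ha 0 1 0, ha 1 0 1]

lemma finrank_Tgt_two : Module.finrank ℝ (Tgt (Sum.inl 2)) = 6 := by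
  refine finrank_eq_of_forall_eval (v := ![1, X 0, X 2, X 0 ^ 2, X 0 * X 2,
    X 2 ^ 2]) ?_ fun a ha i => ?_
  · simp only [Matrix.range_cons, Matrix.range_empty, Set.union_empty, Set.singleton_union]
    rfl
  · replace ha := fun x y z => ha ![x, y, z]
    simp only [Fin.sum_univ_six, Matrix.cons_val, map_one, map_mul, map_pow, eval_X] at ha
    fin_cases i <;> simp only [Fin.mk_zero, Fin.mk_one, Fin.reduceFinMk] <;>
      linarith [ha 0 0 0, ha 1 0 0, ha (-1) 0 0, ha 0 0 1, ha 0 0 (-1), ha 1 0 1]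

lemma finrank_Tgt_three : Module.finrank ℝ (Tgt (Sum.inl 3)) = 8 := by
  refine finrank_eq_of_forall_eval (v := ![1, X 0, X 2, sumSq, euler, cubicX, cubicZ,
      quartic]) ?_ fun a ha i => ?_
  · simp only [Matrix.range_cons, Matrix.range_empty, Set.union_empty, Set.singleton_union]
    rfl
  · replace ha := fun x y z => ha ![x, y, z]
    simp only [Fin.sum_univ_eight, cubicX, cubicZ, quartic, sumSq, Matrix.cons_val, map_one,
      map_add, map_sub, map_mul, map_pow, map_ofNat, eval_X] at ha
    fin_cases i <;> simp only [Fin.mk_zero, Fin.mk_one, Fin.reduceFinMk] <;>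
      linarith [ha 0 0 0, ha 1 0 0, ha (-1) 0 0, ha 0 0 1, ha 0 0 (-1), ha 0 1 0, ha 0 (-1) 0,
      ha 2 0 0, ha 0 0 2]

lemma finrank_Tgt_four : Module.finrank ℝ (Tgt (Sum.inl 4)) = 5 := by
  refine finrank_eq_of_forall_eval (v := ![1, X 0, X 2, sumSq, euler]) ?_ fun a ha i => ?_
  · simp only [Matrix.range_cons, Matrix.range_empty, Set.union_empty, Set.singleton_union]
    rfl
  · replace ha := fun x y z => ha ![x, y, z]
    simp only [Fin.sum_univ_five, sumSq, Matrix.cons_val, map_one, map_add, map_sub, map_mul,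
      map_pow, map_ofNat, eval_X] at ha
    fin_cases i <;> simp only [Fin.mk_zero, Fin.mk_one, Fin.reduceFinMk] <;>
      linarith [ha 0 0 0, ha 1 0 0, ha (-1) 0 0, ha 0 0 1, ha 0 1 0]

lemma finrank_Tgt_inr (α : ℝ) : Module.finrank ℝ (Tgt (Sum.inr α)) = 4 := by
  refine finrank_eq_of_forall_eval (v := ![1, X 0, X 2, sumSq + C α * euler]) ?_ fun a ha i => ?_
  · simp only [Matrix.range_cons, Matrix.range_empty, Set.union_empty, Set.singleton_union]
    rfl
  · replace ha := fun x y z => ha ![x, y, z]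
    simp only [Fin.sum_univ_four, sumSq, Matrix.cons_val, map_one, map_add, map_sub, map_mul,
      map_pow, map_ofNat, eval_X, eval_C] at ha
    fin_cases i <;> simp only [Fin.mk_zero, Fin.mk_one, Fin.reduceFinMk] <;>
      linarith [ha 0 0 0, ha 1 0 0, ha (-1) 0 0, ha 0 0 1]

lemma finrank_Tgt_inl (i : Fin 5) :
    Module.finrank ℝ (Tgt (Sum.inl i)) = (![10, 7, 6, 8, 5] : Fin 5 → ℕ) i :=
  match i with
  | 0 => finrank_Tgt_zero
  | 1 => finrank_Tgt_one
  | 2 => finrank_Tgt_two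
  | 3 => finrank_Tgt_three
  | 4 => finrank_Tgt_four

lemma lagr_sumSq_add_linForm (α a b : ℝ) :
    lagr (sumSq + α • euler) (linForm a b) = linForm (2 * b - α * a) (-2 * a - α * b) := by
  rw [← quadForm_one_zero_one, lagr_quadForm_add_linForm]
  simp only [Matrix.cons_val, zero_mul, mul_one, sub_zero, zero_sub, neg_mul]

-- Cayley–Hamilton for the action of the degree zero generator of `6°` on the linear forms.
lemma lagr_lagr_sumSq_add_linForm (α a b : ℝ) :
    lagr (sumSq + α • euler) (lagr (sumSq + α • euler) (linForm a b)) +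
      (2 * α) • lagr (sumSq + α • euler) (linForm a b) + (α ^ 2 + 4) • linForm a b = 0 := by
  rw [lagr_sumSq_add_linForm, lagr_sumSq_add_linForm]
  algebra

lemma eq_zero_of_smul_lagr_add_smul_linForm {β a b r s : ℝ} (hw : linForm a b ≠ 0)
    (h : r • lagr (sumSq + β • euler) (linForm a b) + s • linForm a b = 0) : r = 0 ∧ s = 0 := by
  have hab : a ^ 2 + b ^ 2 ≠ 0 := fun h0 =>
    hw (linForm_eq_zero.mpr ⟨by nlinarith, by nlinarith⟩)
  obtain ⟨ha, hb⟩ : r * (2 * b - β * a) + s * a = 0 ∧ r * (-2 * a - β * b) + s * b = 0 := by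
    refine linForm_eq_zero.mp ?_
    rw [lagr_sumSq_add_linForm] at h
    linear_combination (norm := algebra) h
  have hr : r = 0 := (mul_eq_zero_iff_right hab).mp (by linear_combination b / 2 * ha - a / 2 * hb)
  subst hr
  exact ⟨rfl, (mul_eq_zero_iff_right hab).mp (by linear_combination a * ha + b * hb)⟩

lemma mem_Tgt_inr {α : ℝ} : f ∈ Tgt (Sum.inr α) ↔
    ∃ a b c d : ℝ, f = a • 1 + linForm b c + d • (sumSq + α • euler) := by
  simp only [Tgt, Submodule.mem_span_insert, Submodule.mem_span_singleton, sumSq, ← smul_eq_C_mul]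
  constructor
  · rintro ⟨a, _, ⟨b, _, ⟨c, _, ⟨d, rfl⟩, rfl⟩, rfl⟩, rfl⟩
    exact ⟨a, b, c, d, by module⟩
  · rintro ⟨a, b, c, d, rfl⟩
    exact ⟨a, _, ⟨b, _, ⟨c, _, ⟨d, rfl⟩, rfl⟩, rfl⟩, by module⟩

lemma sumSq_add_smul_euler_mem_Lgrade (α : ℝ) : sumSq + α • euler ∈ Lgrade 0 :=
  add_mem (quadForm_one_zero_one ▸ quadForm_mem_Lgrade _) (Submodule.smul_mem _ α euler_mem_Lgrade)

lemma exists_eq_smul_of_mem_Tgt_inr {α : ℝ} (hf : f ∈ Tgt (Sum.inr α)) (hf0 : f ∈ Lgrade 0) :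
    ∃ d : ℝ, f = d • (sumSq + α • euler) := by
  obtain ⟨a, b, c, d, rfl⟩ := mem_Tgt_inr.mp hf
  have hneg : a • 1 + linForm b c ∈ Lgrade 0 := (Submodule.add_mem_iff_left _
    (Submodule.smul_mem _ d (sumSq_add_smul_euler_mem_Lgrade α))).mp hf0
  have hzero : (2 * a) • 1 + linForm b c = 0 := by
    rw [mem_Lgrade, lagr_add_right, lagr_smul_right, mem_Lgrade.mp one_mem_Lgrade,
      mem_Lgrade.mp (linForm_mem_Lgrade b c)] at hneg
    push_cast at hneg
    linear_combination (norm := module) -hneg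
  have hlin : linForm b c = 0 := by
    have h := congrArg (lagr euler) hzero
    rw [lagr_add_right, lagr_smul_right, mem_Lgrade.mp one_mem_Lgrade,
      mem_Lgrade.mp (linForm_mem_Lgrade b c), lagr_zero_right] at h
    push_cast at h
    linear_combination (norm := module) h + (2 : ℝ) • hzero
  rw [hlin, add_zero, mul_smul, smul_eq_zero_iff_right two_ne_zero] at hzero
  exact ⟨d, by rw [hlin, hzero, zero_add, zero_add]⟩

lemma eq_of_eq_mul_of_sq_add_four_eq {α β k : ℝ} (hα : 0 ≤ α) (hβ : 0 ≤ β) (htr : α = k * β)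
    (hdet : α ^ 2 + 4 = k ^ 2 * (β ^ 2 + 4)) : α = β :=
  (sq_eq_sq₀ hα hβ).mp <| by
    have hk : k ^ 2 = 1 := by rw [htr] at hdet; linarith
    rw [htr, mul_pow, hk, one_mul]

lemma eq_of_isGradedIso_Tgt_inr {α β : ℝ} (hα : 0 ≤ α) (hβ : 0 ≤ β)
    {χ : Tgt (Sum.inr α) ≃ₗ[ℝ] Tgt (Sum.inr β)} (hχ : IsGradedIso χ) : α = β := by
  let E : Tgt (Sum.inr α) := ⟨sumSq + α • euler, mem_Tgt_inr.mpr ⟨0, 0, 0, 1, by simp [linForm]⟩⟩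
  have hlin (a b : ℝ) : linForm a b ∈ Tgt (Sum.inr α) := mem_Tgt_inr.mpr ⟨0, a, b, 0, by simp⟩
  let w : Tgt (Sum.inr α) := ⟨linForm 1 0, hlin 1 0⟩
  let Ew : Tgt (Sum.inr α) := ⟨lagr E w, lagr_sumSq_add_linForm α 1 0 ▸ hlin _ _⟩
  let EEw : Tgt (Sum.inr α) := ⟨lagr E Ew, by
    simp only [E, Ew, w, lagr_sumSq_add_linForm]; exact hlin _ _⟩
  obtain ⟨k, hk⟩ := exists_eq_smul_of_mem_Tgt_inr (χ E).2
    ((hχ.mem_Lgrade_iff 0 E).mp (sumSq_add_smul_euler_mem_Lgrade α))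
  obtain ⟨a, b, hw⟩ := exists_eq_linForm ((hχ.mem_Lgrade_iff (-1) w).mp (linForm_mem_Lgrade 1 0))
  have hχEw : (χ Ew : PL) = k • lagr (sumSq + β • euler) (linForm a b) := by
    rw [hχ.map_lagr E w Ew rfl, hk, hw, lagr_smul_left]
  have hχEEw : (χ EEw : PL) =
      k ^ 2 • lagr (sumSq + β • euler) (lagr (sumSq + β • euler) (linForm a b)) := by
    rw [hχ.map_lagr E Ew EEw rfl, hk, hχEw, lagr_smul_left, lagr_smul_right, smul_smul, sq]
  have hCH : EEw + (2 * α) • Ew + (α ^ 2 + 4) • w = 0 :=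
    Subtype.ext (lagr_lagr_sumSq_add_linForm α 1 0)
  have hCH' := congrArg (fun u => (χ u : PL)) hCH
  simp only [map_add, map_smul, map_zero, Submodule.coe_add, Submodule.coe_smul,
    Submodule.coe_zero, hχEw, hχEEw, hw] at hCH'
  have hw0 : linForm a b ≠ 0 := fun h0 => by
    have hw' : w = 0 := χ.map_eq_zero_iff.mp (Subtype.ext (hw.trans h0))
    exact one_ne_zero (linForm_eq_zero.mp (congrArg Subtype.val hw')).1
  obtain ⟨h₁, h₂⟩ := eq_zero_of_smul_lagr_add_smul_linForm (β := β)
    (r := 2 * k * (α - k * β)) (s := α ^ 2 + 4 - k ^ 2 * (β ^ 2 + 4)) hw0 (by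
      linear_combination (norm := module) hCH' - k ^ 2 • lagr_lagr_sumSq_add_linForm β a b)
  have hk0 : k ≠ 0 := by rintro rfl; nlinarith
  exact eq_of_eq_mul_of_sq_add_four_eq hα hβ
    (sub_eq_zero.mp ((mul_eq_zero_iff_left (mul_ne_zero two_ne_zero hk0)).mp h₁))
    (sub_eq_zero.mp h₂)

lemma eq_of_isGradedIso_Tgt {i j : Fin 5 ⊕ ℝ} (hi : ∀ α, i = Sum.inr α → 0 ≤ α)
    (hj : ∀ α, j = Sum.inr α → 0 ≤ α) {χ : Tgt i ≃ₗ[ℝ] Tgt j} (hχ : IsGradedIso χ) : i = j := by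
  have hdim := χ.finrank_eq
  have finrank_ne : ∀ i, (![10, 7, 6, 8, 5] : Fin 5 → ℕ) i ≠ 4 := by decide
  rcases i with i | α <;> rcases j with j | β
  · rw [finrank_Tgt_inl, finrank_Tgt_inl] at hdim
    exact congrArg Sum.inl ((by decide : Function.Injective ![10, 7, 6, 8, 5]) hdim)
  · rw [finrank_Tgt_inl, finrank_Tgt_inr] at hdim
    exact absurd hdim (finrank_ne i)
  · rw [finrank_Tgt_inl, finrank_Tgt_inr] at hdim
    exact absurd hdim.symm (finrank_ne j)
  · rw [eq_of_isGradedIso_Tgt_inr (hi α rfl) (hj β rfl) hχ]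

lemma IsContact.exists_map_eq_Tgt {h : Submodule ℝ PL} (hh : IsContact h)
    (hS : ZeroFree (quadParts h)) (hfd : FiniteDimensional ℝ h) :
    ∃ i F, (∀ α, i = Sum.inr α → 0 ≤ α) ∧ IsGradedEmbedding F ∧ h.map F = Tgt i := by
  rcases hh.quadForm_mem_or_exists_definite hS with hquad | ⟨c, hc, hdisc, hspan⟩
  · obtain ⟨i, hi⟩ := hh.exists_eq_Tgt_of_quadForm_mem hquad hfd
    exact ⟨Sum.inl i, LinearMap.id, nofun, .id, h.map_id.trans hi⟩
  · exact hh.exists_map_eq_Tgt_of_definite hc hdisc hspan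

/-- Let `h ⊆ L` be a finite-dimensional graded Lie subalgebra for the
Lagrange bracket with `h ∩ L_{−2} = ℝ·1`, `h ∩ L_{−1} = span{x,z}`, such that
`h₀ = h ∩ L₀` acts irreducibly on `span{x,z}`.  Then `h` is isomorphic, by a Lie algebra
isomorphism respecting the grading, to exactly one of the six graded subalgebras `1°`–`6°`
(with a unique parameter `α ≥ 0` in case `6°`). -/
theorem stmt15 (h : Submodule ℝ PL) (hfd : FiniteDimensional ℝ ↥h)
    (hclosed : ∀ u ∈ h, ∀ v ∈ h, lagr u v ∈ h)
    (hgraded : h = ⨆ p : ℤ, h ⊓ Lgrade p)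
    (hm2 : h ⊓ Lgrade (-2) = Submodule.span ℝ ({1} : Set PL))
    (hm1 : h ⊓ Lgrade (-1) = Submodule.span ℝ ({X 0, X 2} : Set PL))
    (hirr : ∀ W : Submodule ℝ PL, W ≤ Submodule.span ℝ ({X 0, X 2} : Set PL) →
      (∀ u ∈ h ⊓ Lgrade 0, ∀ w ∈ W, lagr u w ∈ W) →
      W = ⊥ ∨ W = Submodule.span ℝ ({X 0, X 2} : Set PL)) :
    ∃! i : Fin 5 ⊕ ℝ,
      (∀ α : ℝ, i = Sum.inr α → 0 ≤ α) ∧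
      ∃ φ : ↥h ≃ₗ[ℝ] ↥(Tgt i),
        (∀ u v w : ↥h, (w : PL) = lagr (u : PL) (v : PL) →
          (φ w : PL) = lagr (φ u : PL) (φ v : PL)) ∧
        (∀ p : ℤ, ∀ u : ↥h, ((u : PL) ∈ Lgrade p ↔ (φ u : PL) ∈ Lgrade p)) := by
  have hh : IsContact h := ⟨hclosed, hgraded, (hm1.ge (Submodule.subset_span (by simp))).1,
    (hm1.ge (Submodule.subset_span (by simp))).1⟩
  obtain ⟨i, F, hi, hF, hmap⟩ := hh.exists_map_eq_Tgt (zeroFree_quadParts hirr) hfd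
  obtain ⟨φ, hφ⟩ : ∃ φ : h ≃ₗ[ℝ] Tgt i, IsGradedIso φ := hmap ▸ ⟨_, hF.isGradedIso h⟩
  refine ⟨i, ⟨hi, φ, hφ.map_lagr, hφ.mem_Lgrade_iff⟩, ?_⟩
  rintro j ⟨hj, ψ, hψ, hψ'⟩
  exact eq_of_isGradedIso_Tgt hj hi (IsGradedIso.symm_trans ⟨hψ, hψ'⟩ hφ hclosed)
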